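/- arXiv:1008.0080 — 6 statements merged into one kernel-verified Lean document; each statement's English description precedes it below -/
import Mathlib

section
/- Every branch of an N-dialogue tree that contains a defensive move by the Opponent O either terminates at an O-move or is infinite. -/
/-! ## Dialogical logic: formulas, statements, moves -/

/-- Propositional formulas, built from atoms (indexed by `ℕ`) and `¬`, `∧`, `∨`, `→`. -/
inductive Formula : Type
  | atom : ℕ → Formula
  | neg : Formula → Formula
  | conj : Formula → Formula → Formula
  | disj : Formula → Formula → Formula
  | impl : Formula → Formula → Formula
  deriving DecidableEq, Inhabited

/-- Statements: formulas together with the three symbolic attacks `∧_L`, `∧_R` and `?`. -/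
inductive Statement : Type
  | form : Formula → Statement
  | conjL : Statement  -- the symbolic attack ∧_L
  | conjR : Statement  -- the symbolic attack ∧_R
  | question : Statement   -- the symbolic attack ?
  deriving DecidableEq, Inhabited

/-- A formula is atomic iff it is an atom. -/
def Formula.isAtomic : Formula → Prop
  | .atom _ => True
  | _ => False

/-- A move of a dialogue: a statement together with a reference.  The reference is
`none` for the initial move, `some (m, true)` for an attack on the assertion made at
move `m`, and `some (m, false)` for a defense against the attack made at move `m`. -/
structure Move : Type where
  stmt : Statement
  ref : Option (ℕ × Bool)
  deriving DecidableEq, Inhabited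

/-! ## Particle rules -/

/-- Particle rules, attacks: `Attacks a φ` holds when the statement `a` is an
admissible attack against the assertion `φ`. -/
inductive Attacks : Statement → Formula → Prop
  | conjL (φ ψ : Formula) : Attacks .conjL (.conj φ ψ)
  | conjR (φ ψ : Formula) : Attacks .conjR (.conj φ ψ)
  | disj (φ ψ : Formula) : Attacks .question (.disj φ ψ)
  | impl (φ ψ : Formula) : Attacks (.form φ) (.impl φ ψ)
  | neg (φ : Formula) : Attacks (.form φ) (.neg φ)

/-- Particle rules, defenses: `Defends s a φ` holds when the statement `s` is an
admissible defense of the assertion `φ` against the attack `a`.  (A negation admits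
no defense.) -/
inductive Defends : Statement → Statement → Formula → Prop
  | conjL (φ ψ : Formula) : Defends (.form φ) .conjL (.conj φ ψ)
  | conjR (φ ψ : Formula) : Defends (.form ψ) .conjR (.conj φ ψ)
  | disjL (φ ψ : Formula) : Defends (.form φ) .question (.disj φ ψ)
  | disjR (φ ψ : Formula) : Defends (.form ψ) .question (.disj φ ψ)
  | impl (φ ψ : Formula) : Defends (.form ψ) (.form φ) (.impl φ ψ)

/-! ## Dialogues

A (finite stage of a) dialogue is modelled as a list of moves; the move at index `i`
is the `i`-th move, made by Proponent P if `i` is even and by Opponent O if `i` is odd. -/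

/-- The skeletal dialogue conditions: move 0 is an assertion of a formula with no
reference, and every later move is an attack on, or a defense against, a specified
earlier move of the other player, in accordance with the particle rules; only
non-atomic assertions may be attacked. -/
def IsDialogue (d : List Move) : Prop :=
  (∀ _ : 0 < d.length, d[0]!.ref = none ∧ ∃ φ : Formula, d[0]!.stmt = .form φ) ∧
  (∀ i : ℕ, 0 < i → i < d.length →
    ∃ (m : ℕ) (z : Bool), d[i]!.ref = some (m, z) ∧ m < i ∧ m % 2 ≠ i % 2 ∧
      (z = true →
        ∃ φ : Formula, d[m]!.stmt = .form φ ∧ ¬ φ.isAtomic ∧ Attacks d[i]!.stmt φ) ∧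
      (z = false →
        ∃ (k : ℕ) (φ : Formula), d[m]!.ref = some (k, true) ∧ k < m ∧
          d[k]!.stmt = .form φ ∧ Defends d[i]!.stmt d[m]!.stmt φ))

/-- Rule D10: P may assert an atomic formula only if O has asserted it earlier. -/
def RuleD10 (d : List Move) : Prop :=
  ∀ i < d.length, i % 2 = 0 → ∀ a : ℕ, d[i]!.stmt = .form (.atom a) →
    ∃ j < i, j % 2 = 1 ∧ d[j]!.stmt = .form (.atom a)

/-- Rule D13: each P-assertion may be attacked at most once. -/
def RuleD13 (d : List Move) : Prop :=
  ∀ m : ℕ, m % 2 = 0 → ∀ i < d.length, ∀ j < d.length,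
    d[i]!.ref = some (m, true) → d[j]!.ref = some (m, true) → i = j

/-- Rule E: O may only react (attack or defend) against the immediately preceding
P-move. -/
def RuleE (d : List Move) : Prop :=
  ∀ i < d.length, i % 2 = 1 → ∃ z : Bool, d[i]!.ref = some (i - 1, z)

/-- The rule set N = {D10, D13}. -/
def NRules (d : List Move) : Prop := RuleD10 d ∧ RuleD13 d

/-- The rule set CL = {D10, D13, E}. -/
def CLRules (d : List Move) : Prop := RuleD10 d ∧ RuleD13 d ∧ RuleE d

/-- A dialogue commences with `φ` when its initial move is P's assertion of `φ`. -/
def CommencesWith (φ : Formula) (d : List Move) : Prop :=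
  0 < d.length ∧ d[0]!.stmt = .form φ

/-- An `S`-dialogue for `φ` (for a rule set `S`): a dialogue commencing with `φ`
that obeys the structural rules `S`.  These are exactly the branches (identified
with their underlying move sequences) of the `S`-dialogue tree for `φ`. -/
def SDialogueFor (S : List Move → Prop) (φ : Formula) (d : List Move) : Prop :=
  IsDialogue d ∧ S d ∧ CommencesWith φ d

/-- P wins a finite `S`-dialogue for `φ`: it ends with a P-move (the last index,
`d.length - 1`, is even, i.e. `d.length` is odd) and it cannot be extended by any
legal further (O-)move. -/
def WinsFor (S : List Move → Prop) (φ : Formula) (d : List Move) : Prop :=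
  SDialogueFor S φ d ∧ d.length % 2 = 1 ∧ ∀ m : Move, ¬ SDialogueFor S φ (d ++ [m])

/-- An `S`-winning strategy for P for `φ`, modelled as a set `T` of `S`-dialogues for
`φ`: the nodes of a rooted subtree of the `S`-dialogue tree for `φ`, each node being
identified with the dialogue leading from the root to it.  The conditions state that
`T` is a nonempty, prefix-closed set of `S`-dialogues for `φ` (hence a rooted subtree
of the `S`-dialogue tree with the same root), that every branch of `T` is a finite
`S`-dialogue won by P (leaves are wins for P, and there is no infinite branch), that
every node at odd depth (an O-move) has exactly one child, and that every node at
even depth (a P-move) has the same children in `T` as in the full dialogue tree. -/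
structure IsWinningStrategy (S : List Move → Prop) (φ : Formula) (T : Set (List Move)) : Prop where
  nonempty : T.Nonempty
  dialogues : ∀ d ∈ T, SDialogueFor S φ d
  prefix_closed : ∀ d ∈ T, ∀ e : List Move, e <+: d → 0 < e.length → e ∈ T
  leaf_wins : ∀ d ∈ T, (∀ m : Move, d ++ [m] ∉ T) → WinsFor S φ d
  no_infinite_branch : ∀ f : ℕ → Move, ∃ n : ℕ, 0 < n ∧ (List.ofFn fun i : Fin n => f i) ∉ T
  odd_unique_child : ∀ d ∈ T, 0 < d.length → d.length % 2 = 0 → ∃! m : Move, d ++ [m] ∈ T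
  even_all_children : ∀ d ∈ T, d.length % 2 = 1 →
    ∀ m : Move, SDialogueFor S φ (d ++ [m]) → d ++ [m] ∈ T

/-- `φ` is `S`-valid iff P has an `S`-winning strategy for `φ`. -/
def SValid (S : List Move → Prop) (φ : Formula) : Prop :=
  ∃ T : Set (List Move), IsWinningStrategy S φ T

/-- `φ` is N-valid (`⊨_N φ`) iff P has an N-winning strategy for `φ`. -/
def NValid (φ : Formula) : Prop := SValid NRules φ

/-- Every branch of an N-dialogue tree that contains a defensive
move by the Opponent O either terminates at an O-move or is infinite.  Formally:
every *finite* branch of the N-dialogue tree for `φ` — i.e., a finite N-dialogue for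
`φ` that is maximal, admitting no legal extension — that contains a defensive move
by O (a defense at an odd-indexed move) terminates at an O-move (its last index,
`d.length - 1`, is odd; i.e., `d.length` is even).  The infinite branches are
precisely the branches not covered by this quantification, which accounts for the
disjunct "or is infinite". -/
theorem o_defense_infinite_branch (φ : Formula) (d : List Move)
    (hdial : SDialogueFor NRules φ d)
    (hmax : ∀ m : Move, ¬ SDialogueFor NRules φ (d ++ [m]))
    (hdef : ∃ i < d.length, i % 2 = 1 ∧ ∃ m : ℕ, d[i]!.ref = some (m, false)) :
    d.length % 2 = 0 := by
  by_contra hodd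
  obtain ⟨i, hi, hi1, m, hm⟩ := hdef
  obtain ⟨⟨h0, h1⟩, ⟨h10, h13⟩, hpos, hc⟩ := hdial
  -- O repeats the defensive move `i`
  apply hmax d[i]!
  have hlen : (d ++ [d[i]!]).length = d.length + 1 := by simp
  have hold : ∀ k, k < d.length → (d ++ [d[i]!])[k]! = d[k]! := by
    intro k hk
    simp [getElem!_def, List.getElem?_append_left hk]
  have hnew : (d ++ [d[i]!])[d.length]! = d[i]! := by
    simp [getElem!_def]
  generalize d ++ [d[i]!] = e at hlen hold hnew
  -- every index of `e` copies an index of `d` of the same parity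
  have key : ∀ j, j < e.length → ∃ p, p < d.length ∧ p ≤ j ∧ p % 2 = j % 2 ∧
      e[j]! = d[p]! ∧ (p = j ∨ (p = i ∧ j = d.length)) := by
    intro j hj
    by_cases hjd : j < d.length
    · exact ⟨j, hjd, le_rfl, rfl, hold j hjd, Or.inl rfl⟩
    · have : j = d.length := by omega
      subst this
      exact ⟨i, hi, by omega, by omega, hnew, Or.inr ⟨rfl, rfl⟩⟩
  refine ⟨⟨?_, ?_⟩, ⟨?_, ?_⟩, by omega, ?_⟩
  · intro _
    rw [hold 0 hpos]
    exact h0 hpos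
  · intro j hj0 hj
    obtain ⟨p, hpd, hle, hpar, heq, hor⟩ := key j hj
    obtain ⟨n, z, hr, hn, hp, ha, hd⟩ := h1 p (by omega) hpd
    refine ⟨n, z, by rw [heq, hr], by omega, by omega, ?_, ?_⟩
    · intro hz
      rw [heq, hold n (by omega)]
      exact ha hz
    · intro hz
      obtain ⟨k, ψ, h₁, h₂, h₃, h₄⟩ := hd hz
      refine ⟨k, ψ, ?_, h₂, ?_, ?_⟩
      · rw [hold n (by omega)]; exact h₁
      · rw [hold k (by omega)]; exact h₃
      · rw [heq, hold n (by omega)]; exact h₄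
  · intro j hj hj2 a ha
    have hjd : j < d.length := by omega
    rw [hold j hjd] at ha
    obtain ⟨k, hk, hk1, hk2⟩ := h10 j hjd hj2 a ha
    exact ⟨k, hk, hk1, by rw [hold k (by omega)]; exact hk2⟩
  · intro n hn j hj k hk hjr hkr
    have hatt : ∀ l, l < e.length → e[l]!.ref = some (n, true) → l < d.length := by
      intro l hl hlr
      by_contra hld
      have : l = d.length := by omega
      subst this
      rw [hnew, hm] at hlr
      simp at hlr
    have hjd := hatt j hj hjr
    have hkd := hatt k hk hkr
    rw [hold j hjd] at hjr
    rw [hold k hkd] at hkr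
    exact h13 n hn j hjd k hkd hjr hkr
  · rw [hold 0 hpos]
    exact hc
end

section
/- No N-winning strategy for the Proponent contains a branch in which the Opponent O makes a defensive move. -/
theorem getBang_append_lt (d : List Move) (x : Move) (i : ℕ) (h : i < d.length) :
    (d ++ [x])[i]! = d[i]! := by
  have h' : i < (d ++ [x]).length := by simp; omega
  rw [getElem!_pos (d ++ [x]) i h', getElem!_pos d i h, List.getElem_append_left h]

theorem getBang_append_len (d : List Move) (x : Move) :
    (d ++ [x])[d.length]! = x := by
  have h' : d.length < (d ++ [x]).length := by simp
  rw [getElem!_pos (d ++ [x]) d.length h']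
  simp

/-- O may always repeat an earlier defense. -/
theorem repeat_defense (φ : Formula) (d : List Move) (hd : SDialogueFor NRules φ d)
    (hodd : d.length % 2 = 1) (i : ℕ) (hi : i < d.length) (hi1 : i % 2 = 1) (m : ℕ)
    (hm : d[i]!.ref = some (m, false)) : SDialogueFor NRules φ (d ++ [d[i]!]) := by
  obtain ⟨⟨h0, h1⟩, ⟨h10, h13⟩, hc0, hc1⟩ := hd
  set x := d[i]! with hx
  have lt := getBang_append_lt d x
  have le := getBang_append_len d x
  refine ⟨⟨?_, ?_⟩, ⟨?_, ?_⟩, ?_, ?_⟩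
  · intro _
    rw [lt 0 hc0]
    exact h0 hc0
  · intro j hj0 hj
    have hj' : j < d.length ∨ j = d.length := by simp at hj; omega
    have key : ∀ j', 0 < j' → j' < d.length → j' ≤ j → j' % 2 = j % 2 →
        (d ++ [x])[j]! = d[j']! → 
        ∃ (m : ℕ) (z : Bool), (d ++ [x])[j]!.ref = some (m, z) ∧ m < j ∧ m % 2 ≠ j % 2 ∧
          (z = true → ∃ φ : Formula, (d ++ [x])[m]!.stmt = .form φ ∧ ¬ φ.isAtomic ∧
            Attacks (d ++ [x])[j]!.stmt φ) ∧
          (z = false → ∃ (k : ℕ) (φ : Formula), (d ++ [x])[m]!.ref = some (k, true) ∧ k < m ∧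
            (d ++ [x])[k]!.stmt = .form φ ∧
              Defends (d ++ [x])[j]!.stmt (d ++ [x])[m]!.stmt φ) := by
      intro j' hj0' hjl hle hpar heq
      obtain ⟨m', z, hr, hlt, hp, ha, hdf⟩ := h1 j' hj0' hjl
      refine ⟨m', z, ?_, by omega, by omega, ?_, ?_⟩
      · rw [heq, hr]
      · intro hz
        rw [heq, lt m' (by omega)]
        exact ha hz
      · intro hz
        obtain ⟨k, ψ, a1, a2, a3, a4⟩ := hdf hz
        refine ⟨k, ψ, ?_, a2, ?_, ?_⟩
        · rw [lt m' (by omega), a1]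
        · rw [lt k (by omega), a3]
        · rw [heq, lt m' (by omega)]
          exact a4
    rcases hj' with hj' | hj'
    · exact key j hj0 hj' le_rfl rfl (lt j hj')
    · exact key i (by omega) hi (by omega) (by omega) (by rw [hj', le])
  · intro j hj hp a ha
    have hj' : j < d.length := by simp at hj; omega
    rw [lt j hj'] at ha
    obtain ⟨k, hk, hk1, hk2⟩ := h10 j hj' hp a ha
    exact ⟨k, hk, hk1, by rw [lt k (by omega)]; exact hk2⟩
  · have aux : ∀ m' j, j < (d ++ [x]).length → (d ++ [x])[j]!.ref = some (m', true) →
        j < d.length ∧ d[j]!.ref = some (m', true) := by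
      intro m' j hj hr
      have hj' : j < d.length ∨ j = d.length := by simp at hj; omega
      rcases hj' with hj' | hj'
      · exact ⟨hj', by rw [← lt j hj']; exact hr⟩
      · rw [hj', le, hm] at hr
        simp at hr
    intro m' hp a ha b hb ra rb
    obtain ⟨a1, a2⟩ := aux m' a ha ra
    obtain ⟨b1, b2⟩ := aux m' b hb rb
    exact h13 m' hp a a1 b b1 a2 b2
  · simp
  · rw [lt 0 hc0]
    exact hc1

/-- A nonempty set of nonempty lists closed under some one-step extension has an infinite
branch. -/
theorem infinite_branch (G : Set (List Move)) (d : List Move) (hd : d ∈ G) (hpos : 0 < d.length)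
    (hG : ∀ e ∈ G, ∃ x : Move, e ++ [x] ∈ G) :
    ∃ f : ℕ → Move, ∀ n : ℕ, ∃ e ∈ G, (List.ofFn fun i : Fin n => f i) <+: e := by
  choose! g hg using hG
  let s : ℕ → List Move := fun n => Nat.rec d (fun _ e => e ++ [g e]) n
  have s1 : ∀ n, s (n + 1) = s n ++ [g (s n)] := fun n => rfl
  have sG : ∀ n, s n ∈ G := by
    intro n
    induction n with
    | zero => exact hd
    | succ n ih => rw [s1]; exact hg _ ih
  have sl : ∀ n, n < (s n).length := by
    intro n
    induction n with
    | zero => exact hpos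
    | succ n ih => rw [s1]; simp; omega
  have sp : ∀ n k, n ≤ k → s n <+: s k := by
    intro n k h
    induction k, h using Nat.le_induction with
    | base => exact List.prefix_rfl
    | succ k _ ih => rw [s1]; exact ih.trans (List.prefix_append _ _)
  refine ⟨fun n => (s n)[n]'(sl n), fun n => ⟨s n, sG n, ?_⟩⟩
  have : (List.ofFn fun i : Fin n => (s i)[(i : ℕ)]'(sl i)) = (s n).take n := by
    apply List.ext_getElem
    · simp [(sl n).le]
    · intro k h1 h2
      have hk : k < n := by simpa using h1
      simp only [List.getElem_ofFn, List.getElem_take]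
      exact (sp k n hk.le).getElem (sl k)
  rw [this]
  exact List.take_prefix _ _

/-- No N-winning strategy for the Proponent contains a branch in
which the Opponent O makes a defensive move: in any N-winning strategy `T` for any
formula `φ`, no node (dialogue) of `T` contains a defensive move at an odd index
(an O-move). -/
theorem no_winning_strategy_with_o_defense (φ : Formula) (T : Set (List Move))
    (hT : IsWinningStrategy NRules φ T) :
    ∀ d ∈ T, ∀ i < d.length, i % 2 = 1 → ∀ m : ℕ, d[i]!.ref ≠ some (m, false) := by
  intro d hd i hi hi1 m hm
  obtain ⟨f, hf⟩ := infinite_branch {e | e ∈ T ∧ i < e.length ∧ e[i]! = d[i]!} d ⟨hd, hi, rfl⟩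
    (by omega) (by
      rintro e ⟨he, hie, hei⟩
      have h : ∃ x, e ++ [x] ∈ T := by
        rcases Nat.mod_two_eq_zero_or_one e.length with h | h
        · exact (hT.odd_unique_child e he (by omega) h).exists
        · exact ⟨_, hT.even_all_children e he h _ (repeat_defense φ e (hT.dialogues e he) h i hie
            hi1 m (by rw [hei]; exact hm))⟩
      obtain ⟨x, hx⟩ := h
      exact ⟨x, hx, by simp; omega, by rw [getBang_append_lt e x i hie, hei]⟩)
  obtain ⟨n, hn, hnT⟩ := hT.no_infinite_branch f
  obtain ⟨e, he, hpre⟩ := hf n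
  exact hnT (hT.prefix_closed e he.1 _ hpre (by simpa using hn))
end

section
/- (Weakening) For all propositional formulas φ and ψ: if ψ is N-valid, then the implication φ → ψ is N-valid. -/
namespace Weak

/-- Shift a move by two positions; the initial move becomes a defense against move 1. -/
def sh (m : Move) : Move :=
  ⟨m.stmt, match m.ref with
    | none => some (1, false)
    | some (k, z) => some (k + 2, z)⟩

/-- Left inverse of `sh`. -/
def unsh (m : Move) : Move :=
  ⟨m.stmt, match m.ref with
    | some (k + 2, z) => some (k, z)
    | _ => none⟩

lemma unsh_sh (m : Move) : unsh (sh m) = m := by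
  rcases m with ⟨s, _ | ⟨k, z⟩⟩ <;> rfl

lemma sh_inj {a b : Move} (h : sh a = sh b) : a = b := by
  rw [← unsh_sh a, h, unsh_sh]

lemma sh_stmt (m : Move) : (sh m).stmt = m.stmt := rfl

lemma sh_ref_true {m : Move} {k : ℕ} (h : (sh m).ref = some (k, true)) :
    ∃ k', k = k' + 2 ∧ m.ref = some (k', true) := by
  rcases m with ⟨s, _ | ⟨k', z⟩⟩ 
  · simp [sh] at h
  · simp only [sh, Option.some.injEq, Prod.mk.injEq] at h
    exact ⟨k', h.1.symm, by rw [h.2]⟩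

lemma sh_ref_some {m : Move} {k : ℕ} {z : Bool} (h : m.ref = some (k, z)) :
    (sh m).ref = some (k + 2, z) := by
  simp [sh, h]

lemma sh_ref_none {m : Move} (h : m.ref = none) :
    (sh m).ref = some (1, false) := by
  simp [sh, h]

/-- Initial move. -/
def m0 (φ ψ : Formula) : Move := ⟨.form (.impl φ ψ), none⟩

/-- Forced reply of the opponent. -/
def m1 (φ : Formula) : Move := ⟨.form φ, some (0, true)⟩

/-- Embedding of dialogues for `ψ`. -/
def E (φ ψ : Formula) (d : List Move) : List Move := m0 φ ψ :: m1 φ :: d.map sh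

variable {φ ψ : Formula}

lemma E_inj {d e : List Move} (h : E φ ψ d = E φ ψ e) : d = e := by
  have h' : d.map sh = e.map sh := by simpa [E] using h
  exact List.map_injective_iff.2 (fun _ _ => sh_inj) h'

lemma E_length (d : List Move) : (E φ ψ d).length = d.length + 2 := by simp [E]

lemma E_append (d : List Move) (m : Move) : E φ ψ d ++ [sh m] = E φ ψ (d ++ [m]) := by simp [E]

lemma E_zero (d : List Move) : (E φ ψ d)[0]! = m0 φ ψ := rfl

lemma E_one (d : List Move) : (E φ ψ d)[1]! = m1 φ := rfl

lemma E_add (d : List Move) {i : ℕ} (h : i < d.length) : (E φ ψ d)[i + 2]! = sh d[i]! := by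
  simp [E, h]

lemma app_lt (d : List Move) (m : Move) {i : ℕ} (h : i < d.length) :
    (d ++ [m])[i]! = d[i]! := by
  have h' : i < (d ++ [m]).length := by simp; omega
  rw [getElem!_pos d i h, getElem!_pos (d ++ [m]) i h', List.getElem_append_left h]

lemma app_eq (d : List Move) (m : Move) : (d ++ [m])[d.length]! = m := by
  simp

lemma dialogue_E {d : List Move} (h1 : IsDialogue d) (h2 : NRules d)
    (h3 : 0 < d.length → d[0]!.stmt = .form ψ) :
    SDialogueFor NRules (.impl φ ψ) (E φ ψ d) := by
  refine ⟨⟨?_, ?_⟩, ⟨?_, ?_⟩, ?_, ?_⟩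
  · intro _
    exact ⟨rfl, _, rfl⟩
  · intro i hi hl
    rw [E_length] at hl
    match i, hi, hl with
    | 1, _, _ =>
      refine ⟨0, true, rfl, by omega, by omega, ?_, by simp⟩
      intro _
      exact ⟨.impl φ ψ, rfl, by simp [Formula.isAtomic], Attacks.impl φ ψ⟩
    | 2, _, hl =>
      have hd : 0 < d.length := by omega
      have e := E_add (φ := φ) (ψ := ψ) d hd
      simp only [Nat.zero_add] at e
      rw [e]
      refine ⟨1, false, sh_ref_none (h1.1 hd).1, by omega, by omega, by simp, ?_⟩
      intro _
      refine ⟨0, .impl φ ψ, rfl, by omega, rfl, ?_⟩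
      rw [sh_stmt, h3 hd]
      exact Defends.impl φ ψ
    | j + 3, _, hl =>
      have hj : j + 1 < d.length := by omega
      obtain ⟨m, z, hr, hm, hp, ht, hf⟩ := h1.2 (j + 1) (by omega) hj
      have e := E_add (φ := φ) (ψ := ψ) d hj
      rw [show j + 3 = j + 1 + 2 from rfl, e]
      refine ⟨m + 2, z, sh_ref_some hr, by omega, by omega, ?_, ?_⟩
      · intro hz
        rw [E_add d (by omega)]
        exact ht hz
      · intro hz
        obtain ⟨k, χ, a, b, c, f⟩ := hf hz
        rw [E_add d (by omega)]
        refine ⟨k + 2, χ, sh_ref_some a, by omega, ?_, f⟩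
        rw [E_add d (by omega)]
        exact c
  · intro i hi hp a ha
    rw [E_length] at hi
    match i, hi, hp, ha with
    | 0, _, _, ha => rw [E_zero] at ha; simp [m0] at ha
    | j + 2, hi, hp, ha =>
      rw [E_add d (by omega)] at ha
      obtain ⟨k, hk, hk2, hk3⟩ := h2.1 j (by omega) (by omega) a ha
      refine ⟨k + 2, by omega, by omega, ?_⟩
      rw [E_add d (by omega)]
      exact hk3
  · intro m hm i hi j hj hir hjr
    rw [E_length] at hi hj
    have key : ∀ i, i < d.length + 2 → (E φ ψ d)[i]!.ref = some (m, true) →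
        (i = 1 ∧ m = 0) ∨ ∃ i' m', i = i' + 2 ∧ m = m' + 2 ∧ i' < d.length ∧
          d[i']!.ref = some (m', true) := by
      intro i hi hir
      match i, hi, hir with
      | 0, _, hir => rw [E_zero] at hir; simp [m0] at hir
      | 1, _, hir => 
        left
        rw [E_one] at hir
        simp [m1] at hir
        exact ⟨rfl, hir.symm⟩
      | i + 2, hi, hir =>
        right
        rw [E_add d (by omega)] at hir
        obtain ⟨k, hk, hk'⟩ := sh_ref_true hir
        exact ⟨i, k, rfl, hk, by omega, hk'⟩
    rcases key i hi hir with ⟨a, b⟩ | ⟨i', m', a, b, c, e⟩ <;>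
      rcases key j hj hjr with ⟨a', b'⟩ | ⟨j', m'', a', b', c', e'⟩
    · omega
    · omega
    · omega
    · obtain rfl : m' = m'' := by omega
      have := h2.2 m' (by omega) i' c j' c' e e'
      omega
  · simp [E]
  · rfl

lemma back {d : List Move} {m : Move} (hd : SDialogueFor NRules ψ d) (ho : d.length % 2 = 1)
    (h : SDialogueFor NRules (.impl φ ψ) (E φ ψ d ++ [m])) :
    ∃ m', m = sh m' ∧ SDialogueFor NRules ψ (d ++ [m']) := by
  obtain ⟨h1, ⟨-, h13⟩, -⟩ := h
  obtain ⟨d1, ⟨d10, d13⟩, d0, ds⟩ := hd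
  have el : (E φ ψ d).length = d.length + 2 := E_length d
  have elast : (E φ ψ d ++ [m])[d.length + 2]! = m := by
    have := app_eq (E φ ψ d) m
    rwa [el] at this
  have eone : (E φ ψ d ++ [m])[1]! = m1 φ := rfl
  have ezero : (E φ ψ d ++ [m])[0]! = m0 φ ψ := rfl
  have eadd : ∀ i, i < d.length → (E φ ψ d ++ [m])[i + 2]! = sh d[i]! := by
    intro i hi
    rw [app_lt _ _ (by omega), E_add d hi]
  obtain ⟨M, z, hr, hM, hp, ht, hf⟩ := h1.2 (d.length + 2) (by omega) (by simp [el])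
  rw [elast] at hr ht hf
  have hM2 : ∃ M', M = M' + 2 := by
    rcases M with _ | _ | M'
    · exfalso
      cases z with
      | true =>
        have := h13 0 rfl 1 (by simp [el]) (d.length + 2) (by simp [el]) (by rw [eone]; rfl)
          (by rw [elast]; exact hr)
        omega
      | false =>
        obtain ⟨k, χ, a, _⟩ := hf rfl
        rw [ezero] at a
        simp [m0] at a
    · omega
    · exact ⟨M', rfl⟩
  obtain ⟨M', rfl⟩ := hM2
  have hM' : M' < d.length := by omega
  rw [eadd M' hM'] at ht hf
  have hsh : m = sh ⟨m.stmt, some (M', z)⟩ := by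
    rcases m with ⟨s, r⟩
    simp only at hr
    simp [sh, hr]
  refine ⟨⟨m.stmt, some (M', z)⟩, hsh, ⟨?_, ?_⟩, ⟨?_, ?_⟩, ?_, ?_⟩
  · intro _
    rw [app_lt _ _ d0]
    exact d1.1 d0
  · intro i hi hl
    simp only [List.length_append, List.length_singleton] at hl
    rcases Nat.lt_or_ge i d.length with hlt | hge
    · obtain ⟨n, y, a, b, c, t, f⟩ := d1.2 i hi hlt
      refine ⟨n, y, ?_, b, c, ?_, ?_⟩
      · rwa [app_lt _ _ hlt]
      · intro hy
        rw [app_lt _ _ hlt, app_lt _ _ (by omega)]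
        exact t hy
      · intro hy
        obtain ⟨k, χ, p, q, r, s⟩ := f hy
        refine ⟨k, χ, ?_, q, ?_, ?_⟩
        · rwa [app_lt _ _ (by omega)]
        · rwa [app_lt _ _ (by omega)]
        · rwa [app_lt _ _ hlt, app_lt _ _ (by omega)]
    · obtain rfl : i = d.length := by omega
      rw [app_eq]
      refine ⟨M', z, rfl, hM', by omega, ?_, ?_⟩
      · intro hz
        rw [app_lt _ _ hM']
        exact ht hz
      · intro hz
        obtain ⟨k, χ, p, q, r, s⟩ := hf hz
        obtain ⟨k', rfl, hk'⟩ := sh_ref_true p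
        rw [eadd k' (by omega)] at r
        rw [app_lt _ _ hM']
        refine ⟨k', χ, hk', by omega, ?_, s⟩
        rw [app_lt _ _ (by omega)]
        exact r
  · intro i hi hp a ha
    simp only [List.length_append, List.length_singleton] at hi
    have hlt : i < d.length := by
      rcases Nat.lt_or_ge i d.length with hlt | hge
      · exact hlt
      · omega
    rw [app_lt _ _ hlt] at ha
    obtain ⟨j, hj, hj2, hj3⟩ := d10 i hlt hp a ha
    refine ⟨j, hj, hj2, ?_⟩
    rwa [app_lt _ _ (by omega)]
  · rw [hsh, E_append] at h13
    intro n hn i hi j hj hir hjr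
    have := h13 (n + 2) (by omega) (i + 2) (by rw [E_length]; omega) (j + 2)
      (by rw [E_length]; omega) (by rw [E_add _ hi]; exact sh_ref_some hir)
      (by rw [E_add _ hj]; exact sh_ref_some hjr)
    omega
  · simp
  · rwa [app_lt _ _ d0]

/-- The shifted strategy. -/
def T' (φ ψ : Formula) (T : Set (List Move)) : Set (List Move) :=
  {e | e = [m0 φ ψ] ∨ ∃ d, (d ∈ T ∨ d = []) ∧ e = E φ ψ d}

lemma mem_E {T : Set (List Move)} {d : List Move} :
    E φ ψ d ∈ T' φ ψ T ↔ (d ∈ T ∨ d = []) := by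
  constructor
  · rintro (h | ⟨e, he, h⟩)
    · simp [E] at h
    · rwa [E_inj h]
  · intro h
    exact Or.inr ⟨d, h, rfl⟩

lemma mem_E_app {T : Set (List Move)} {d : List Move} {m : Move} :
    E φ ψ d ++ [m] ∈ T' φ ψ T ↔ ∃ m', m = sh m' ∧ d ++ [m'] ∈ T := by
  constructor
  · rintro (h | ⟨e, he, h⟩)
    · simp [E] at h
    · have h' : d.map sh ++ [m] = e.map sh := by simpa [E] using h
      rcases List.eq_nil_or_concat e with rfl | ⟨e', m', rfl⟩
      · simp at h'
      · rw [List.concat_eq_append] at h' he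
        rw [List.map_append, List.map_singleton, List.append_singleton_inj] at h'
        obtain ⟨h1, h2⟩ := h'
        have : d = e' := List.map_injective_iff.2 (fun _ _ => sh_inj) h1
        subst this
        refine ⟨m', h2, ?_⟩
        simpa using he
  · rintro ⟨m', rfl, h⟩
    rw [E_append, mem_E]
    exact Or.inl h

lemma root_mem {T : Set (List Move)} (hT : IsWinningStrategy NRules ψ T) :
    [(⟨.form ψ, none⟩ : Move)] ∈ T ∧ ∀ x : Move, [x] ∈ T → x = ⟨.form ψ, none⟩ := by
  have key : ∀ x : Move, [x] ∈ T → x = ⟨.form ψ, none⟩ := by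
    intro x hx
    obtain ⟨a, -, -, c⟩ := hT.dialogues _ hx
    have b := (a.1 (by simp)).1
    rcases x with ⟨s, r⟩
    simp at b c
    simp [b, c]
  refine ⟨?_, key⟩
  obtain ⟨d, hd⟩ := hT.nonempty
  rcases d with _ | ⟨x, d⟩
  · have := (hT.dialogues _ hd).2.2.1
    simp at this
  · have := hT.prefix_closed _ hd [x] (by simp) (by simp)
    rwa [← key x this]

lemma main {T : Set (List Move)} (hT : IsWinningStrategy NRules ψ T) :
    IsWinningStrategy NRules (.impl φ ψ) (T' φ ψ T) := by
  obtain ⟨hroot, huniq⟩ := root_mem hT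
  have hne : [] ∉ T := fun h => by
    have := (hT.dialogues _ h).2.2.1
    simp at this
  have hE : ∀ d, (d ∈ T ∨ d = []) → SDialogueFor NRules (.impl φ ψ) (E φ ψ d) := by
    rintro d (h | rfl)
    · obtain ⟨a, b, -, c⟩ := hT.dialogues d h
      exact dialogue_E a b (fun _ => c)
    · refine dialogue_E ⟨by simp, by simp⟩ ⟨?_, ?_⟩ (by simp)
      · intro i hi
        simp at hi
      · intro m _ i hi
        simp at hi
  refine ⟨⟨_, Or.inl rfl⟩, ?_, ?_, ?_, ?_, ?_, ?_⟩
  · rintro _ (rfl | ⟨d, hd, rfl⟩)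
    · refine ⟨⟨fun _ => ⟨rfl, _, rfl⟩, ?_⟩, ⟨?_, ?_⟩, by simp, rfl⟩
      · intro i hi hl
        simp at hl
        omega
      · intro i hi _ a ha
        simp at hi
        subst hi
        simp [m0] at ha
      · intro m _ i hi j hj _ _
        simp at hi hj
        omega
    · exact hE d hd
  · rintro _ (rfl | ⟨d, hd, rfl⟩) e he hl
    · left
      rcases e with _ | ⟨x, e⟩
      · simp at hl
      · simpa [List.cons_prefix_cons] using he
    · rcases e with _ | ⟨x, _ | ⟨y, e⟩⟩
      · simp at hl
      · left
        simp [E, List.cons_prefix_cons] at he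
        rw [he]
      · simp only [E, List.cons_prefix_cons] at he
        obtain ⟨rfl, rfl, he⟩ := he
        obtain ⟨e', he', rfl⟩ : ∃ e', e' <+: d ∧ e = e'.map sh := by
          rw [List.prefix_iff_eq_take] at he
          refine ⟨d.take e.length, List.take_prefix _ _, ?_⟩
          rw [List.map_take]
          exact he
        refine mem_E.2 ?_
        rcases e' with _ | ⟨z, e'⟩
        · exact Or.inr rfl
        · left
          rcases hd with hd | rfl
          · exact hT.prefix_closed d hd _ he' (by simp)
          · simp at he'
  · rintro _ (rfl | ⟨d, hd, rfl⟩) hleaf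
    · exact absurd (mem_E.2 (Or.inr rfl) : E φ ψ [] ∈ T' φ ψ T) (hleaf (m1 φ))
    · rcases hd with hd | rfl
      · have hw := hT.leaf_wins d hd (fun m hm =>
          hleaf (sh m) (mem_E_app.2 ⟨m, rfl, hm⟩))
        refine ⟨hE d (Or.inl hd), by rw [E_length]; have := hw.2.1; omega, ?_⟩
        intro m hm
        obtain ⟨m', -, h'⟩ := back hw.1 hw.2.1 hm
        exact hw.2.2 m' h'
      · exact absurd (mem_E_app.2 ⟨_, rfl, hroot⟩) (hleaf _)
  · intro f
    by_contra! hcon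
    obtain ⟨n, hn, hnT⟩ := hT.no_infinite_branch (fun i => unsh (f (i + 2)))
    apply hnT
    have h2 := hcon (n + 2) (by omega)
    rcases h2 with h | ⟨d, hd, h⟩
    · have := congrArg List.length h
      simp at this
    · have h3 : List.ofFn (fun i : Fin n => f (i + 2)) = d.map sh := by
        have := congrArg (List.drop 2) h
        simpa [E, List.ofFn_succ] using this
      have h4 : List.ofFn (fun i : Fin n => unsh (f (i + 2))) = d := by
        have := congrArg (List.map unsh) h3
        rw [List.map_ofFn, List.map_map] at this
        have e : unsh ∘ sh = id := funext unsh_sh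
        rw [e, List.map_id] at this
        exact this
      rw [h4]
      rcases hd with hd | rfl
      · exact hd
      · have := congrArg List.length h4
        simp at this
        omega
  · rintro _ (rfl | ⟨d, hd, rfl⟩) hl hp
    · simp at hp
    · rw [E_length] at hp
      have : ∃! m, d ++ [m] ∈ T := by
        rcases hd with hd | rfl
        · have h0 := (hT.dialogues d hd).2.2.1
          exact hT.odd_unique_child d hd h0 (by omega)
        · exact ⟨_, hroot, fun x hx => huniq x hx⟩
      obtain ⟨m, hm, hu⟩ := this
      refine ⟨sh m, mem_E_app.2 ⟨m, rfl, hm⟩, ?_⟩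
      intro y hy
      obtain ⟨m', rfl, h'⟩ := mem_E_app.1 hy
      rw [hu m' h']
  · rintro _ (rfl | ⟨d, hd, rfl⟩) hp m hm
    · have hm1 : m = m1 φ := by
        obtain ⟨M, z, hr, hM, -, ht, hf⟩ := hm.1.2 1 (by omega) (by simp)
        obtain rfl : M = 0 := by omega
        have e1 : ([m0 φ ψ] ++ [m])[1]! = m := rfl
        have e0 : ([m0 φ ψ] ++ [m])[0]! = m0 φ ψ := rfl
        rw [e1] at hr ht hf
        rw [e0] at ht hf
        cases z with
        | false =>
          obtain ⟨k, χ, a, _⟩ := hf rfl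
          simp [m0] at a
        | true =>
          obtain ⟨χ, a, -, b⟩ := ht rfl
          simp only [m0, Statement.form.injEq] at a
          subst a
          rcases m with ⟨s, r⟩
          simp only at hr b
          cases b
          rw [hr]
          rfl
      subst hm1
      exact (mem_E.2 (Or.inr rfl) : E φ ψ [] ∈ T' φ ψ T)
    · rw [E_length] at hp
      rcases hd with hd | rfl
      · obtain ⟨m', rfl, h'⟩ := back (hT.dialogues d hd) (by omega) hm
        exact mem_E_app.2 ⟨m', rfl, hT.even_all_children d hd (by omega) m' h'⟩
      · simp at hp

end Weak

/-- **Weakening.** For all formulas `φ` and `ψ`: if `ψ` is N-valid,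
then `φ → ψ` is N-valid. -/
theorem weakening (φ ψ : Formula) (h : NValid ψ) : NValid (Formula.impl φ ψ) := by
  obtain ⟨T, hT⟩ := h
  exact ⟨_, Weak.main hT⟩
end

section
/- (Characterization of implication) For all propositional formulas φ and ψ: if the implication φ → ψ is N-valid, then at least one of the following holds: (1) φ is an atom; (2) φ is a negation (i.e., of the form ¬χ for some formula χ); (3) ψ is N-valid. -/
namespace DialogueAux

abbrev L (χ : Formula) (d : List Move) : Prop := SDialogueFor NRules χ d

theorem get_left (d : List Move) (m : Move) (i : ℕ) (h : i < d.length) :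
    (d ++ [m])[i]! = d[i]! := by
  have h2 : i < (d ++ [m]).length := by simp; omega
  rw [getElem!_pos (d ++ [m]) i h2, getElem!_pos d i h, List.getElem_append_left h]

theorem get_last (d : List Move) (m : Move) : (d ++ [m])[d.length]! = m := by
  have h2 : d.length < (d ++ [m]).length := by simp
  rw [getElem!_pos (d ++ [m]) d.length h2]; simp

/-- Positions in which P (who has just moved) can force a win. -/
inductive Win (χ : Formula) : List Move → Prop
  | mk (d : List Move) (r : Move → Move)
      (h1 : ∀ m, L χ (d ++ [m]) → L χ (d ++ [m] ++ [r m]))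
      (h2 : ∀ m, L χ (d ++ [m]) → Win χ (d ++ [m] ++ [r m])) : Win χ d

theorem win_of_exists {χ : Formula} {d : List Move}
    (h : ∀ m, L χ (d ++ [m]) → ∃ r, L χ (d ++ [m] ++ [r]) ∧ Win χ (d ++ [m] ++ [r])) :
    Win χ d := by
  classical
  choose! r hr using h
  exact ⟨d, r, fun m hm => (hr m hm).1, fun m hm => (hr m hm).2⟩

/-- Legality of one more move. -/
def Step (d : List Move) (x : Move) : Prop :=
  (∃ (m : ℕ) (z : Bool), x.ref = some (m, z) ∧ m < d.length ∧ m % 2 ≠ d.length % 2 ∧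
      (z = true →
        ∃ φ : Formula, d[m]!.stmt = .form φ ∧ ¬ φ.isAtomic ∧ Attacks x.stmt φ) ∧
      (z = false →
        ∃ (k : ℕ) (φ : Formula), d[m]!.ref = some (k, true) ∧ k < m ∧
          d[k]!.stmt = .form φ ∧ Defends x.stmt d[m]!.stmt φ)) ∧
  (d.length % 2 = 0 → ∀ a : ℕ, x.stmt = .form (.atom a) →
    ∃ j < d.length, j % 2 = 1 ∧ d[j]!.stmt = .form (.atom a)) ∧
  (∀ m : ℕ, m % 2 = 0 → x.ref = some (m, true) → ∀ i < d.length, d[i]!.ref ≠ some (m, true))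

theorem step_of_legal {χ : Formula} {d : List Move} {x : Move} (hd : 0 < d.length)
    (h : L χ (d ++ [x])) : Step d x := by
  obtain ⟨⟨_, h1⟩, ⟨h10, h13⟩, _⟩ := h
  have hl : (d ++ [x]).length = d.length + 1 := by simp
  refine ⟨?_, ?_, ?_⟩
  · obtain ⟨m, z, a, b, c, e, f⟩ := h1 d.length hd (by omega)
    rw [get_last] at a e f
    rw [get_left _ _ _ b] at e f
    refine ⟨m, z, a, b, c, e, ?_⟩
    intro hz
    obtain ⟨k, φ, p, q, r, s⟩ := f hz
    rw [get_left _ _ _ (by omega)] at r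
    exact ⟨k, φ, p, q, r, s⟩
  · intro hp a ha
    obtain ⟨j, hj, hj2, hj3⟩ := h10 d.length (by omega) hp a (by rw [get_last]; exact ha)
    rw [get_left _ _ _ hj] at hj3
    exact ⟨j, hj, hj2, hj3⟩
  · intro m hm hx i hi hc
    have := h13 m hm d.length (by omega) i (by omega) (by rw [get_last]; exact hx)
      (by rw [get_left _ _ _ hi]; exact hc)
    omega

theorem legal_of_step {χ : Formula} {d : List Move} {x : Move} 
    (h : L χ d) (hs : Step d x) : L χ (d ++ [x]) := by
  obtain ⟨⟨h0, h1⟩, ⟨h10, h13⟩, hd, hc⟩ := h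
  obtain ⟨s1, s2, s3⟩ := hs
  have hl : (d ++ [x]).length = d.length + 1 := by simp
  refine ⟨⟨?_, ?_⟩, ⟨?_, ?_⟩, ?_, ?_⟩
  · intro _
    rw [get_left _ _ _ hd]
    exact h0 hd
  · intro i hi hi2
    rcases Nat.lt_or_ge i d.length with hlt | hge
    · obtain ⟨m, z, a, b, c, e, f⟩ := h1 i hi hlt
      rw [get_left _ _ _ hlt]
      refine ⟨m, z, a, b, c, ?_, ?_⟩
      · rw [get_left _ _ _ (by omega)]; exact e
      · intro hz
        obtain ⟨k, φ, p, q, r, s⟩ := f hz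
        refine ⟨k, φ, ?_, q, ?_, ?_⟩
        · rw [get_left _ _ _ (by omega)]; exact p
        · rw [get_left _ _ _ (by omega)]; exact r
        · rw [get_left _ _ _ (by omega)]; exact s
    · obtain rfl : i = d.length := by omega
      rw [get_last]
      obtain ⟨m, z, a, b, c, e, f⟩ := s1
      refine ⟨m, z, a, b, c, ?_, ?_⟩
      · rw [get_left _ _ _ (by omega)]; exact e
      · intro hz
        obtain ⟨k, φ, p, q, r, s⟩ := f hz
        refine ⟨k, φ, ?_, q, ?_, ?_⟩
        · rw [get_left _ _ _ (by omega)]; exact p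
        · rw [get_left _ _ _ (by omega)]; exact r
        · rw [get_left _ _ _ (by omega)]; exact s
  · intro i hi hp a ha
    rcases Nat.lt_or_ge i d.length with hlt | hge
    · rw [get_left _ _ _ hlt] at ha
      obtain ⟨j, hj, hj2, hj3⟩ := h10 i hlt hp a ha
      exact ⟨j, hj, hj2, by rw [get_left _ _ _ (by omega)]; exact hj3⟩
    · obtain rfl : i = d.length := by omega
      rw [get_last] at ha
      obtain ⟨j, hj, hj2, hj3⟩ := s2 hp a ha
      exact ⟨j, hj, hj2, by rw [get_left _ _ _ (by omega)]; exact hj3⟩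
  · intro m hm i hi j hj hi2 hj2
    rcases Nat.lt_or_ge i d.length with hlt | hge
    · rw [get_left _ _ _ hlt] at hi2
      rcases Nat.lt_or_ge j d.length with hlt' | hge'
      · rw [get_left _ _ _ hlt'] at hj2
        exact h13 m hm i hlt j hlt' hi2 hj2
      · obtain rfl : j = d.length := by omega
        rw [get_last] at hj2
        exact absurd hi2 (s3 m hm hj2 i hlt)
    · obtain rfl : i = d.length := by omega
      rw [get_last] at hi2
      rcases Nat.lt_or_ge j d.length with hlt' | hge'
      · rw [get_left _ _ _ hlt'] at hj2
        exact absurd hj2 (s3 m hm hi2 j hlt')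
      · omega
  · omega
  · rw [get_left _ _ _ hd]; exact hc

theorem ref_lt {χ : Formula} {d : List Move} (h : L χ d) {i m : ℕ} {z : Bool}
    (hi : i < d.length) (hr : d[i]!.ref = some (m, z)) : m < i := by
  obtain ⟨⟨h0, h1⟩, _, _⟩ := h
  rcases Nat.eq_zero_or_pos i with rfl | hp
  · rw [(h0 hi).1] at hr; cases hr
  · obtain ⟨m', z', a, b, _⟩ := h1 i hp hi
    rw [a] at hr
    simp only [Option.some.injEq, Prod.mk.injEq] at hr
    omega

/-! ### Strategies and `Win` -/

theorem win_of_strategy {χ : Formula} {T : Set (List Move)} (hT : IsWinningStrategy NRules χ T)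
    (d0 : List Move) (hd0 : d0 ∈ T) (hl0 : d0.length = 1) : Win χ d0 := by
  classical
  by_contra hw
  have key : ∀ d, d ∈ T → d.length % 2 = 1 → ¬ Win χ d →
      ∃ e, e ∈ T ∧ e.length = d.length + 2 ∧ ¬ Win χ e ∧ d <+: e := by
    intro d hd hl hnw
    by_contra hno
    push Not at hno
    apply hnw
    apply win_of_exists
    intro m hm
    have hm2 := hT.even_all_children d hd hl m hm
    obtain ⟨r, hr, _⟩ := hT.odd_unique_child _ hm2 (by simp) (by simp; omega)
    refine ⟨r, hT.dialogues _ hr, ?_⟩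
    by_contra hc
    exact hno _ hr (by simp) hc ⟨[m, r], by simp⟩
  let A := {d : List Move // d ∈ T ∧ d.length % 2 = 1 ∧ ¬ Win χ d}
  have key2 : ∀ d : A, ∃ e : A, e.1.length = d.1.length + 2 ∧ d.1 <+: e.1 := by
    rintro ⟨d, h1, h2, h3⟩
    obtain ⟨e, a, b, c, f⟩ := key d h1 h2 h3
    exact ⟨⟨e, a, by omega, c⟩, b, f⟩
  choose nx hnx using key2
  let D : ℕ → A := fun n => Nat.rec ⟨d0, hd0, by omega, hw⟩ (fun _ x => nx x) n
  have hlen : ∀ n, (D n).1.length = 2 * n + 1 := by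
    intro n
    induction n with
    | zero => exact hl0
    | succ k ih =>
      have := (hnx (D k)).1
      change (nx (D k)).1.length = _
      omega
  have hpre : ∀ n k, (D n).1 <+: (D (n + k)).1 := by
    intro n k
    induction k with
    | zero => exact List.prefix_rfl
    | succ k ih => exact ih.trans (hnx (D (n + k))).2
  obtain ⟨n, hn, hnot⟩ := hT.no_infinite_branch (fun i => (D i).1[i]!)
  apply hnot
  have : (List.ofFn fun i : Fin n => (D i).1[(i : ℕ)]!) = (D n).1.take n := by
    apply List.ext_getElem
    · simp [hlen]; omega
    · intro i hi1 hi2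
      simp only [List.length_ofFn] at hi1
      have := hlen i
      have hh := hlen n
      obtain ⟨k, rfl⟩ : ∃ k, n = i + k := ⟨n - i, by omega⟩
      simp only [List.getElem_ofFn, List.getElem_take]
      rw [getElem!_pos _ _ (by omega)]
      exact (hpre i k).getElem (by omega)
  rw [this]
  refine hT.prefix_closed _ (D n).2.1 _ (List.take_prefix _ _) ?_
  simp [hlen]; omega

/-- A strategy tree rooted in position `d`. -/
structure Strat (χ : Formula) (d : List Move) (T : Set (List Move)) : Prop where
  root : d ∈ T
  ext : ∀ e ∈ T, d <+: e ∧ L χ e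
  pre : ∀ e ∈ T, ∀ e', e' <+: e → d <+: e' → e' ∈ T
  odd : ∀ e ∈ T, e.length % 2 = 0 → ∃! m : Move, e ++ [m] ∈ T
  even : ∀ e ∈ T, e.length % 2 = 1 → ∀ m : Move, L χ (e ++ [m]) → e ++ [m] ∈ T
  fin : ∀ f : ℕ → Move, ∃ n, d.length ≤ n ∧ (List.ofFn fun i : Fin n => f i) ∉ T

theorem snoc_prefix_inj {d e : List Move} {m m' : Move} (h : d ++ [m] <+: e)
    (h' : d ++ [m'] <+: e) : m = m' := by
  have := List.IsPrefix.eq_of_length (List.prefix_of_prefix_length_le h h' (by simp)) (by simp)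
  simpa using this

theorem strat_of_win {χ : Formula} {d : List Move} (hw : Win χ d) :
    L χ d → d.length % 2 = 1 → ∃ T, Strat χ d T := by
  classical
  induction hw with
  | mk d r h1 h2 ih =>
    intro hL hodd
    have ih' : ∀ m, L χ (d ++ [m]) → ∃ T, Strat χ (d ++ [m] ++ [r m]) T := fun m hm =>
      ih m hm (h1 m hm) (by simp; omega)
    choose! S hS using ih'
    have hpm : ∀ m e, L χ (d ++ [m]) → e ∈ S m → d ++ [m] <+: e := fun m e hm he =>
      (List.prefix_append _ _).trans ((hS m hm).ext e he).1
    refine ⟨{e | e = d ∨ ∃ m, L χ (d ++ [m]) ∧ (e = d ++ [m] ∨ e ∈ S m)}, ?_, ?_, ?_, ?_, ?_, ?_⟩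
    · exact Or.inl rfl
    · rintro e (rfl | ⟨m, hm, rfl | he⟩)
      · exact ⟨List.prefix_rfl, hL⟩
      · exact ⟨List.prefix_append _ _, hm⟩
      · exact ⟨(List.prefix_append _ _).trans (hpm m e hm he), ((hS m hm).ext e he).2⟩
    · rintro e (rfl | ⟨m, hm, rfl | he⟩) e' h3 h4
      · exact Or.inl (h3.eq_of_length_le h4.length_le)
      · rcases List.prefix_concat_iff.1 h3 with rfl | h5
        · exact Or.inr ⟨m, hm, Or.inl rfl⟩
        · exact Or.inl (h5.eq_of_length_le h4.length_le)
      · have h6 := ((hS m hm).ext e he).1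
        rcases Nat.lt_or_ge e'.length (d ++ [m] ++ [r m]).length with hlt | hge
        · have h7 : e' <+: d ++ [m] ++ [r m] :=
            List.prefix_of_prefix_length_le h3 h6 hlt.le
          rcases List.prefix_concat_iff.1 h7 with rfl | h5
          · omega
          rcases List.prefix_concat_iff.1 h5 with rfl | h5
          · exact Or.inr ⟨m, hm, Or.inl rfl⟩
          · exact Or.inl (h5.eq_of_length_le h4.length_le)
        · exact Or.inr ⟨m, hm, Or.inr ((hS m hm).pre e he e' h3
            (List.prefix_of_prefix_length_le h6 h3 hge))⟩
    · rintro e (rfl | ⟨m, hm, rfl | he⟩) hev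
      · omega
      · refine ⟨r m, Or.inr ⟨m, hm, Or.inr (hS m hm).root⟩, ?_⟩
        rintro x (hx | ⟨m', hm', hx | hx⟩)
        · have := congrArg List.length hx
          simp at this
        · have := congrArg List.length hx
          simp at this
        · have h6 := ((hS m' hm').ext _ hx).1
          have := h6.eq_of_length (by simp)
          simp at this
          rw [← this.2, this.1]
      · obtain ⟨x, hx, hu⟩ := (hS m hm).odd e he hev
        refine ⟨x, Or.inr ⟨m, hm, Or.inr hx⟩, ?_⟩
        have hp := hpm m e hm he
        have hle := ((hS m hm).ext e he).1.length_le
        simp at hle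
        rintro y (hy | ⟨m', hm', hy | hy⟩)
        · have := congrArg List.length hy
          simp at this; omega
        · have := congrArg List.length hy
          simp at this; omega
        · have h6 := hpm m' _ hm' hy
          obtain rfl := snoc_prefix_inj (hp.trans (List.prefix_append e [y])) h6
          exact hu y hy
    · rintro e (rfl | ⟨m, hm, rfl | he⟩) ho x hx
      · exact Or.inr ⟨x, hx, Or.inl rfl⟩
      · simp at ho; omega
      · exact Or.inr ⟨m, hm, Or.inr ((hS m hm).even e he ho x hx)⟩
    · intro f
      by_contra hcon
      push Not at hcon
      have hin : ∀ n, d.length + 2 ≤ n → ∃ m, L χ (d ++ [m]) ∧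
          (List.ofFn fun i : Fin n => f i) ∈ S m := by
        intro n hn
        rcases hcon n (by omega) with h | ⟨m, hm, h | h⟩
        · have := congrArg List.length h
          simp at this; omega
        · have := congrArg List.length h
          simp at this; omega
        · exact ⟨m, hm, h⟩
      have hget : ∀ n m, d.length + 2 ≤ n → L χ (d ++ [m]) →
          (List.ofFn fun i : Fin n => f i) ∈ S m → m = f d.length := by
        intro n m hn hm h
        have h7 := (hpm m _ hm h).getElem (i := d.length) (by simp)
        simpa using h7
      obtain ⟨m, hm, h⟩ := hin (d.length + 2) le_rfl
      obtain ⟨n, hn, hnot⟩ := (hS m hm).fin f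
      simp only [List.length_append, List.length_singleton] at hn
      obtain ⟨m', hm', h'⟩ := hin n (by omega)
      apply hnot
      rw [hget _ m le_rfl hm h, ← hget _ m' (by omega) hm' h']
      exact h'

theorem legal_single {χ : Formula} (hχ : ¬ χ.isAtomic) : L χ [⟨.form χ, none⟩] := by
  refine ⟨⟨?_, ?_⟩, ⟨?_, ?_⟩, ?_, ?_⟩
  · intro _; exact ⟨rfl, χ, rfl⟩
  · intro i h1 h2; simp at h2; omega
  · intro i h1 h2 a ha
    simp at h1; subst h1
    simp at ha; subst ha
    exact absurd trivial hχ
  · intro m _ i hi j hj _ _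
    simp at hi hj; omega
  · simp
  · rfl

theorem valid_of_win {χ : Formula} {x : Move} (hL : L χ [x]) (hw : Win χ [x]) : NValid χ := by
  obtain ⟨T, hT⟩ := strat_of_win hw hL (by simp)
  refine ⟨T, ⟨_, hT.root⟩, fun d hd => (hT.ext d hd).2, ?_, ?_, ?_, ?_, hT.even⟩
  · intro d hd e he hpos
    exact hT.pre d hd e he (List.prefix_of_prefix_length_le (hT.ext d hd).1 he (by simp only [List.length_singleton]; omega))
  · intro d hd hleaf
    have hodd : d.length % 2 = 1 := by
      by_contra hc
      obtain ⟨m, hm, _⟩ := hT.odd d hd (by omega)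
      exact hleaf m hm
    exact ⟨(hT.ext d hd).2, hodd, fun m hm => hleaf m (hT.even d hd hodd m hm)⟩
  · intro f
    obtain ⟨n, hn, h⟩ := hT.fin f
    exact ⟨n, by simp at hn; omega, h⟩
  · intro d hd _ h; exact hT.odd d hd h

theorem win_of_valid {χ : Formula} (h : NValid χ) :
    L χ [⟨.form χ, none⟩] ∧ Win χ [⟨.form χ, none⟩] := by
  obtain ⟨T, hT⟩ := h
  obtain ⟨d, hd⟩ := hT.nonempty
  obtain ⟨⟨h0, _⟩, _, hpos, hc⟩ := hT.dialogues d hd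
  obtain ⟨x, t, rfl⟩ : ∃ x t, d = x :: t := List.exists_cons_of_length_pos hpos
  have hx : x = ⟨.form χ, none⟩ := by
    have := (h0 hpos).1
    obtain ⟨s, r⟩ := x
    simp at this hc
    simp [this, hc]
  subst hx
  have hmem := hT.prefix_closed _ hd [⟨.form χ, none⟩] ⟨t, rfl⟩ (by simp)
  exact ⟨hT.dialogues _ hmem, win_of_strategy hT _ hmem rfl⟩

/-! ### Attacking a defensible assertion is fatal -/

theorem exists_defense {s : Statement} {φ : Formula} (h : Attacks s φ)
    (hn : ∀ θ, φ ≠ .neg θ) : ∃ t, Defends t s φ := by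
  cases h with
  | conjL a b => exact ⟨_, .conjL a b⟩
  | conjR a b => exact ⟨_, .conjR a b⟩
  | disj a b => exact ⟨_, .disjL a b⟩
  | impl a b => exact ⟨_, .impl a b⟩
  | neg a => exact absurd rfl (hn a)

theorem fatal {χ φ : Formula} (hn : ∀ θ, φ ≠ .neg θ) {d : List Move} (hw : Win χ d) :
    L χ d → d.length % 2 = 1 → d[1]!.stmt = .form φ →
      ∀ j, j < d.length → j % 2 = 0 → d[j]!.ref = some (1, true) → False := by
  induction hw with
  | mk d r h1 h2 ih =>
    intro hL hodd hφ j hj hj2 hr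
    have h1j := ref_lt hL hj hr
    have hatt : Attacks d[j]!.stmt φ := by
      obtain ⟨m, z, a, b, c, e, f⟩ := hL.1.2 j (by omega) hj
      rw [a] at hr
      simp only [Option.some.injEq, Prod.mk.injEq] at hr
      obtain ⟨rfl, rfl⟩ := hr
      obtain ⟨φ', p, q, s⟩ := e rfl
      rw [hφ] at p
      cases p
      exact s
    obtain ⟨t, ht⟩ := exists_defense hatt hn
    have hleg : L χ (d ++ [⟨t, some (j, false)⟩]) := by
      apply legal_of_step hL
      refine ⟨⟨j, false, rfl, hj, by omega, by simp, fun _ => ⟨1, φ, hr, h1j, hφ, ht⟩⟩, ?_, ?_⟩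
      · intro h; omega
      · intro m hm h; simp at h
    refine ih _ hleg (h1 _ hleg) (by simp; omega) ?_ j (by simp; omega) hj2 ?_
    · rw [get_left _ _ _ (by simp; omega), get_left _ _ _ (by omega)]; exact hφ
    · rw [get_left _ _ _ (by simp; omega), get_left _ _ _ (by omega)]; exact hr

/-! ### The simulation -/

structure Rel (φ ψ : Formula) (d d' : List Move) (g : ℕ → ℕ) : Prop where
  len : 3 ≤ d.length
  legal : L (.impl φ ψ) d
  legal' : L ψ d'
  one : d[1]! = ⟨.form φ, some (0, true)⟩
  lt : ∀ j, 2 ≤ j → j < d.length → g j < d'.length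
  par : ∀ j, 2 ≤ j → j < d.length → g j % 2 = j % 2
  stmt : ∀ j, 2 ≤ j → j < d.length → d'[g j]!.stmt = d[j]!.stmt
  ref : ∀ j, 2 ≤ j → j < d.length → ∀ m z, d[j]!.ref = some (m, z) →
    (2 ≤ m ∧ d'[g j]!.ref = some (g m, z)) ∨ (m = 1 ∧ z = false ∧ g j = 0)
  surj : ∀ i, i < d'.length → ∃ j, 2 ≤ j ∧ j < d.length ∧ g j = i

/-- Extend the big dialogue by a copy of an existing move. -/
theorem Rel.copy {φ ψ : Formula} {d d' : List Move} {g : ℕ → ℕ} (h : Rel φ ψ d d' g)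
    {x : Move} {i : ℕ} (hL : L (.impl φ ψ) (d ++ [x])) (hi : i < d'.length)
    (hp : i % 2 = d.length % 2) (hs : d'[i]!.stmt = x.stmt)
    (hr : ∀ m z, x.ref = some (m, z) →
      (2 ≤ m ∧ m < d.length ∧ d'[i]!.ref = some (g m, z)) ∨ (m = 1 ∧ z = false ∧ i = 0)) :
    Rel φ ψ (d ++ [x]) d' (Function.update g d.length i) := by
  have hg : ∀ j, j < d.length → Function.update g d.length i j = g j := fun j hj =>
    Function.update_of_ne (by omega) _ _
  have hg' : Function.update g d.length i d.length = i := Function.update_self _ _ _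
  have hlen := h.len
  have hl : (d ++ [x]).length = d.length + 1 := by simp
  have cases' : ∀ j, j < (d ++ [x]).length → j < d.length ∨ j = d.length := by
    intro j hj; omega
  refine ⟨by omega, hL, h.legal', ?_, ?_, ?_, ?_, ?_, ?_⟩
  · rw [get_left _ _ _ (by omega)]; exact h.one
  · intro j h2 hj
    rcases cases' j hj with hj | rfl
    · rw [hg j hj]; exact h.lt j h2 hj
    · rw [hg']; exact hi
  · intro j h2 hj
    rcases cases' j hj with hj | rfl
    · rw [hg j hj]; exact h.par j h2 hj
    · rw [hg']; exact hp
  · intro j h2 hj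
    rcases cases' j hj with hj | rfl
    · rw [hg j hj, get_left _ _ _ hj]; exact h.stmt j h2 hj
    · rw [hg', get_last]; exact hs
  · intro j h2 hj m z hm
    rcases cases' j hj with hj | rfl
    · rw [get_left _ _ _ hj] at hm
      have := ref_lt h.legal hj hm
      rw [hg j hj, hg m (by omega)]; exact h.ref j h2 hj m z hm
    · rw [get_last] at hm
      rw [hg']
      rcases hr m z hm with ⟨a, b, c⟩ | c
      · rw [hg m b]; exact Or.inl ⟨a, c⟩
      · exact Or.inr c
  · intro k hk
    obtain ⟨j, a, b, c⟩ := h.surj k hk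
    exact ⟨j, a, by omega, by rw [hg j b]; exact c⟩

/-- Extend both dialogues by corresponding moves. -/
theorem Rel.both {φ ψ : Formula} {d d' : List Move} {g : ℕ → ℕ} (h : Rel φ ψ d d' g)
    {x x' : Move} (hL : L (.impl φ ψ) (d ++ [x])) (hL' : L ψ (d' ++ [x']))
    (hp : d'.length % 2 = d.length % 2) (hs : x'.stmt = x.stmt)
    (hr : ∀ m z, x.ref = some (m, z) →
      (2 ≤ m ∧ m < d.length ∧ x'.ref = some (g m, z))) :
    Rel φ ψ (d ++ [x]) (d' ++ [x']) (Function.update g d.length d'.length) := by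
  have hg : ∀ j, j < d.length → Function.update g d.length d'.length j = g j := fun j hj =>
    Function.update_of_ne (by omega) _ _
  have hg' : Function.update g d.length d'.length d.length = d'.length :=
    Function.update_self _ _ _
  have hlen := h.len
  have hl : (d ++ [x]).length = d.length + 1 := by simp
  have hl' : (d' ++ [x']).length = d'.length + 1 := by simp
  have cases' : ∀ j, j < (d ++ [x]).length → j < d.length ∨ j = d.length := by
    intro j hj; omega
  refine ⟨by omega, hL, hL', ?_, ?_, ?_, ?_, ?_, ?_⟩
  · rw [get_left _ _ _ (by omega)]; exact h.one
  · intro j h2 hj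
    rcases cases' j hj with hj | rfl
    · rw [hg j hj]; have := h.lt j h2 hj; omega
    · rw [hg']; omega
  · intro j h2 hj
    rcases cases' j hj with hj | rfl
    · rw [hg j hj]; exact h.par j h2 hj
    · rw [hg']; exact hp
  · intro j h2 hj
    rcases cases' j hj with hj | rfl
    · rw [hg j hj, get_left _ _ _ hj, get_left _ _ _ (h.lt j h2 hj)]; exact h.stmt j h2 hj
    · rw [hg', get_last, get_last]; exact hs
  · intro j h2 hj m z hm
    rcases cases' j hj with hj | rfl
    · rw [get_left _ _ _ hj] at hm
      have := ref_lt h.legal hj hm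
      rw [hg j hj, hg m (by omega), get_left _ _ _ (h.lt j h2 hj)]; exact h.ref j h2 hj m z hm
    · rw [get_last] at hm
      rw [hg', get_last]
      obtain ⟨a, b, c⟩ := hr m z hm
      rw [hg m b]; exact Or.inl ⟨a, c⟩
  · intro k hk
    rcases Nat.lt_or_ge k d'.length with hk | hk
    · obtain ⟨j, a, b, c⟩ := h.surj k hk
      exact ⟨j, a, by omega, by rw [hg j b]; exact c⟩
    · exact ⟨d.length, by omega, by omega, by omega⟩

theorem zero_ref {χ : Formula} {d : List Move} (h : L χ d) : d[0]!.ref = none :=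
  (h.1.1 h.2.2.1).1

/-- A legal O-move in the small dialogue lifts to the big one. -/
theorem Rel.lift_O {φ ψ : Formula} {d d' : List Move} {g : ℕ → ℕ} (h : Rel φ ψ d d' g)
    (hd : d.length % 2 = 1) (hd' : d'.length % 2 = 1) {x' : Move} (hL' : L ψ (d' ++ [x'])) :
    ∃ x, L (.impl φ ψ) (d ++ [x]) ∧ ∃ g', Rel φ ψ (d ++ [x]) (d' ++ [x']) g' := by
  obtain ⟨⟨m', z, hr, hm, hpar, hatt, hdef⟩, h10, h13⟩ := step_of_legal h.legal'.2.2.1 hL'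
  obtain ⟨j, hj2, hj, hgj⟩ := h.surj m' hm
  have hjp := h.par j hj2 hj
  have hL : L (.impl φ ψ) (d ++ [⟨x'.stmt, some (j, z)⟩]) := by
    apply legal_of_step h.legal
    refine ⟨⟨j, z, rfl, hj, by omega, ?_, ?_⟩, fun hc => by omega, ?_⟩
    · intro hz
      obtain ⟨θ, a, b, c⟩ := hatt hz
      refine ⟨θ, ?_, b, c⟩
      rw [← h.stmt j hj2 hj, hgj]; exact a
    · intro hz
      obtain ⟨k', θ, a, b, c, e⟩ := hdef hz
      obtain ⟨k, w, hk, hkj, -⟩ := h.legal.1.2 j (by omega) hj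
      rcases h.ref j hj2 hj k w hk with ⟨p, q⟩ | ⟨_, _, q⟩
      · rw [hgj, a] at q
        simp only [Option.some.injEq, Prod.mk.injEq] at q
        obtain ⟨q1, rfl⟩ := q
        refine ⟨k, θ, hk, hkj, ?_, ?_⟩
        · rw [← h.stmt k p (by omega), ← q1]; exact c
        · rw [← h.stmt j hj2 hj, hgj]; exact e
      · rw [hgj] at q
        subst q
        rw [zero_ref h.legal'] at a
        cases a
    · intro m hm2 hx i hi hc
      simp only [Option.some.injEq, Prod.mk.injEq] at hx
      obtain ⟨rfl, rfl⟩ := hx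
      have hji := ref_lt h.legal hi hc
      rcases h.ref i (by omega) hi j true hc with ⟨p, q⟩ | ⟨p, _⟩
      · rw [hgj] at q
        exact h13 m' (by omega) hr (g i) (h.lt i (by omega) hi) q
      · omega
  refine ⟨_, hL, _, h.both hL hL' (by omega) rfl ?_⟩
  intro m w hx
  simp only [Option.some.injEq, Prod.mk.injEq] at hx
  obtain ⟨rfl, rfl⟩ := hx
  exact ⟨hj2, hj, by rw [hgj]; exact hr⟩

/-- A legal P-move in the big dialogue not referring to move 1 descends to the small one. -/
theorem Rel.down_P {φ ψ : Formula} {d d' : List Move} {g : ℕ → ℕ} (hφ : ¬ φ.isAtomic)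
    (h : Rel φ ψ d d' g)
    (hd : d.length % 2 = 0) (hd' : d'.length % 2 = 0) {x : Move} (hL : L (.impl φ ψ) (d ++ [x]))
    (hx : ∀ z, x.ref ≠ some (1, z)) :
    ∃ x', L ψ (d' ++ [x']) ∧ ∃ g', Rel φ ψ (d ++ [x]) (d' ++ [x']) g' := by
  obtain ⟨⟨m, z, hr, hm, hpar, hatt, hdef⟩, h10, h13⟩ := step_of_legal h.legal.2.2.1 hL
  have hm2 : 2 ≤ m := by
    rcases Nat.lt_or_ge m 2 with h1 | h1
    · obtain rfl : m = 1 := by omega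
      exact absurd hr (hx z)
    · exact h1
  have hgl := h.lt m hm2 hm
  have hgp := h.par m hm2 hm
  have hL' : L ψ (d' ++ [⟨x.stmt, some (g m, z)⟩]) := by
    apply legal_of_step h.legal'
    refine ⟨⟨g m, z, rfl, hgl, by omega, ?_, ?_⟩, ?_, ?_⟩
    · intro hz
      rw [h.stmt m hm2 hm]; exact hatt hz
    · intro hz
      obtain ⟨k, θ, a, b, c, e⟩ := hdef hz
      rcases h.ref m hm2 hm k true a with ⟨p, q⟩ | ⟨_, q, _⟩
      · refine ⟨g k, θ, q, ref_lt h.legal' hgl q, ?_, ?_⟩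
        · rw [h.stmt k p (by omega)]; exact c
        · rw [h.stmt m hm2 hm]; exact e
      · cases q
    · intro _ a ha
      obtain ⟨j, p, q, r⟩ := h10 hd a ha
      have hj2 : 2 ≤ j := by
        rcases Nat.lt_or_ge j 2 with h1 | h1
        · obtain rfl : j = 1 := by omega
          rw [h.one] at r
          simp only [Statement.form.injEq] at r
          subst r
          exact absurd trivial hφ
        · exact h1
      exact ⟨g j, h.lt j hj2 p, by rw [h.par j hj2 p]; exact q, by rw [h.stmt j hj2 p]; exact r⟩
    · intro k hk hc
      simp only [Option.some.injEq, Prod.mk.injEq] at hc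
      omega
  refine ⟨_, hL', _, h.both hL hL' (by omega) rfl ?_⟩
  intro m' w hx
  rw [hr] at hx
  simp only [Option.some.injEq, Prod.mk.injEq] at hx
  obtain ⟨rfl, rfl⟩ := hx
  exact ⟨hm2, hm, rfl⟩

/-- What the simulation yields at a position of the big dialogue. -/
def Goal (φ ψ : Formula) (d : List Move) : Prop :=
  ∀ d' g, Rel φ ψ d d' g →
    (d'.length % 2 = 1 → Win ψ d') ∧
    (d'.length % 2 = 0 → d[d.length - 1]!.stmt = .form ψ → g (d.length - 1) = 0 →
      ∃ r', L ψ (d' ++ [r']) ∧ Win ψ (d' ++ [r']))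

theorem one_ref_stmt {φ ψ : Formula} {d : List Move} {x : Move} (hd : 2 ≤ d.length)
    (hone : d[1]! = ⟨.form φ, some (0, true)⟩) (hL : L (.impl φ ψ) (d ++ [x]))
    (hx : x.ref = some (1, false)) : x.stmt = .form ψ := by
  obtain ⟨⟨m, z, hr, hm, hpar, hatt, hdef⟩, h10, h13⟩ := step_of_legal (by omega) hL
  rw [hx] at hr
  simp only [Option.some.injEq, Prod.mk.injEq] at hr
  obtain ⟨rfl, rfl⟩ := hr
  obtain ⟨k, θ, a, b, c, e⟩ := hdef rfl
  obtain rfl : k = 0 := by omega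
  have h0 := hL.2.2.2
  rw [get_left _ _ _ (by omega), c] at h0
  simp only [Statement.form.injEq] at h0
  subst h0
  rw [hone] at e
  generalize x.stmt = s at e ⊢
  cases e
  rfl

theorem respond {φ ψ : Formula} (hφ : ¬ φ.isAtomic) (hn : ∀ θ, φ ≠ .neg θ)
    {d d' : List Move} {g : ℕ → ℕ} (h : Rel φ ψ d d' g)
    (hd : d.length % 2 = 0) (hd' : d'.length % 2 = 0) {x : Move} (hL : L (.impl φ ψ) (d ++ [x]))
    (hw : Win (.impl φ ψ) (d ++ [x])) (ih : Goal φ ψ (d ++ [x])) :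
    ∃ r', L ψ (d' ++ [r']) ∧ Win ψ (d' ++ [r']) := by
  have hlen := h.len
  by_cases hx : ∀ z, x.ref ≠ some (1, z)
  · obtain ⟨x', hL', g', hR⟩ := h.down_P hφ hd hd' hL hx
    exact ⟨x', hL', (ih _ _ hR).1 (by simp; omega)⟩
  · push Not at hx
    obtain ⟨z, hz⟩ := hx
    cases z with
    | true =>
      exfalso
      refine fatal hn hw hL (by simp; omega) ?_ d.length (by simp) hd ?_
      · rw [get_left _ _ _ (by omega), h.one]
      · rw [get_last]; exact hz
    | false =>
      have hs := one_ref_stmt (by omega) h.one hL hz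
      have hR := h.copy (i := 0) hL h.legal'.2.2.1 (by omega)
        (by rw [hs]; exact h.legal'.2.2.2) (by
          intro m z hm
          rw [hz] at hm
          simp only [Option.some.injEq, Prod.mk.injEq] at hm
          exact Or.inr ⟨hm.1.symm, hm.2.symm, rfl⟩)
      have : (d ++ [x]).length - 1 = d.length := by simp
      refine (ih _ _ hR).2 hd' ?_ ?_
      · rw [this, get_last]; exact hs
      · rw [this]; exact Function.update_self _ _ _

theorem simulate {φ ψ : Formula} (hφ : ¬ φ.isAtomic) (hn : ∀ θ, φ ≠ .neg θ)
    {d : List Move} (hw : Win (.impl φ ψ) d) : d.length % 2 = 1 → Goal φ ψ d := by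
  induction hw with
  | mk d r h1 h2 ih =>
    intro hodd d' g hR
    have hlen := hR.len
    have step : ∀ x e' g', L (.impl φ ψ) (d ++ [x]) → Rel φ ψ (d ++ [x]) e' g' →
        e'.length % 2 = 0 → ∃ r', L ψ (e' ++ [r']) ∧ Win ψ (e' ++ [r']) := by
      intro x e' g' hL hR' he
      exact respond hφ hn hR' (by simp; omega) he (h1 x hL) (h2 x hL) (ih x hL (by simp; omega))
    refine ⟨?_, ?_⟩
    · intro hd'
      apply win_of_exists
      intro x' hL'
      obtain ⟨x, hL, g', hR'⟩ := hR.lift_O hodd hd' hL'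
      exact step x _ g' hL hR' (by simp; omega)
    · intro hd' hlast hlastg
      have hpos := hR.legal'.2.2.1
      have h1lt : 1 < d'.length := by omega
      obtain ⟨m, z, a, b, c, e, f⟩ := hR.legal'.1.2 1 (by omega) h1lt
      obtain rfl : m = 0 := by omega
      have hz : z = true := by
        by_contra hz
        obtain ⟨k, θ, p, _⟩ := f (by simpa using hz)
        rw [zero_ref hR.legal'] at p
        cases p
      subst hz
      obtain ⟨θ, p, q, s⟩ := e rfl
      rw [hR.legal'.2.2.2] at p
      cases p
      have hL : L (.impl φ ψ) (d ++ [⟨d'[1]!.stmt, some (d.length - 1, true)⟩]) := by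
        apply legal_of_step hR.legal
        refine ⟨⟨d.length - 1, true, rfl, by omega, by omega, fun _ => ⟨ψ, hlast, q, s⟩, by simp⟩,
          fun hc => by omega, ?_⟩
        intro m hm hx i hi hc
        simp only [Option.some.injEq, Prod.mk.injEq] at hx
        have := ref_lt hR.legal hi hc
        omega
      refine step _ d' _ hL (hR.copy (i := 1) hL h1lt (by omega) rfl ?_) hd'
      intro m z hx
      simp only [Option.some.injEq, Prod.mk.injEq] at hx
      obtain ⟨rfl, rfl⟩ := hx
      refine Or.inl ⟨by omega, by omega, ?_⟩
      rw [hlastg]; exact a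

theorem main {φ ψ : Formula} (hφ : ¬ φ.isAtomic) (hn : ∀ θ, φ ≠ .neg θ)
    (h : NValid (.impl φ ψ)) : NValid ψ := by
  obtain ⟨hL0, hw0⟩ := win_of_valid h
  have hL1 : L (.impl φ ψ) ([⟨.form (.impl φ ψ), none⟩] ++ [⟨.form φ, some (0, true)⟩]) := by
    apply legal_of_step hL0
    refine ⟨⟨0, true, rfl, by simp, by simp, fun _ => ⟨.impl φ ψ, rfl, fun hc => hc, .impl φ ψ⟩,
      by simp⟩, by simp, ?_⟩
    intro m _ _ i hi hc
    simp at hi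
    subst hi
    simp at hc
  cases hw0 with
  | mk _ r h1 h2 =>
    have hL := h1 _ hL1
    have hw := h2 _ hL1
    generalize r ⟨.form φ, some (0, true)⟩ = x at hL hw
    obtain ⟨⟨m, z, hr, hm, hpar, hatt, hdef⟩, h10, h13⟩ := step_of_legal (by simp) hL
    obtain rfl : m = 1 := by simp at hm hpar; omega
    cases z with
    | true =>
      exact (fatal hn hw hL (by simp) rfl 2 (by simp) rfl hr).elim
    | false =>
      have hs := one_ref_stmt (by simp) rfl hL hr
      have hψ : ¬ ψ.isAtomic := by
        intro ha
        cases ψ with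
        | atom a =>
          obtain ⟨j, p, q, s⟩ := h10 (by simp) a hs
          obtain rfl : j = 1 := by simp at p; omega
          simp at s
          subst s
          exact hφ trivial
        | _ => exact ha
      have hLψ := legal_single hψ
      refine valid_of_win hLψ ?_
      refine ((simulate hφ hn hw (by simp)) _ (fun _ => 0) ?_).1 (by simp)
      have h2' : ∀ j, 2 ≤ j → j < ([⟨.form (.impl φ ψ), none⟩] ++ [⟨.form φ, some (0, true)⟩]
          ++ [x] : List Move).length → j = 2 := by
        intro j h2 h3
        simp at h3; omega
      refine ⟨by simp, hL, hLψ, rfl, by simp, ?_, ?_, ?_, ?_⟩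
      · intro j a b
        obtain rfl := h2' j a b
        rfl
      · intro j a b
        obtain rfl := h2' j a b
        exact hs.symm
      · intro j a b m z hm
        obtain rfl := h2' j a b
        have hm' : x.ref = some (m, z) := hm
        rw [hr] at hm'
        simp only [Option.some.injEq, Prod.mk.injEq] at hm'
        exact Or.inr ⟨hm'.1.symm, hm'.2.symm, rfl⟩
      · intro i hi
        refine ⟨2, le_rfl, by simp, ?_⟩
        simp at hi; omega

end DialogueAux

/-- **Characterization of implication.** If `φ → ψ` is N-valid, then
`φ` is an atom, or `φ` is a negation, or `ψ` is N-valid. -/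
theorem characterization_of_implication (φ ψ : Formula)
    (h : NValid (Formula.impl φ ψ)) :
    (∃ a : ℕ, φ = Formula.atom a) ∨ (∃ χ : Formula, φ = Formula.neg χ) ∨ NValid ψ := by
  by_cases h1 : ∃ a : ℕ, φ = Formula.atom a
  · exact Or.inl h1
  by_cases h2 : ∃ χ : Formula, φ = Formula.neg χ
  · exact Or.inr (Or.inl h2)
  refine Or.inr (Or.inr ?_)
  have hφ : ¬ φ.isAtomic := by
    intro ha
    cases φ with
    | atom a => exact h1 ⟨a, rfl⟩
    | _ => exact ha
  exact DialogueAux.main hφ (fun θ hθ => h2 ⟨θ, hθ⟩) h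
end

section
/- For every propositional formula φ: if the negation ¬φ is N-valid, then φ is itself a negation, i.e., φ = ¬ψ for some formula ψ, and moreover ψ is N-valid. -/
/-! ## Auxiliary lemmas -/

theorem getB_append_left (d : List Move) (m : Move) (i : ℕ) (h : i < d.length) :
    (d ++ [m])[i]! = d[i]! := by
  simp [List.getElem!_eq_getElem?_getD, List.getElem?_append_left h]

theorem getB_append_last (d : List Move) (m : Move) :
    (d ++ [m])[d.length]! = m := by
  simp

/-- Legality of a single further move. -/
def StepOK (d : List Move) (n : Move) : Prop :=
  ∃ (m : ℕ) (z : Bool), n.ref = some (m, z) ∧ m < d.length ∧ m % 2 ≠ d.length % 2 ∧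
    (z = true →
      ∃ φ : Formula, d[m]!.stmt = .form φ ∧ ¬ φ.isAtomic ∧ Attacks n.stmt φ) ∧
    (z = false →
      ∃ (k : ℕ) (φ : Formula), d[m]!.ref = some (k, true) ∧ k < m ∧
        d[k]!.stmt = .form φ ∧ Defends n.stmt d[m]!.stmt φ) ∧
    (d.length % 2 = 0 → ∀ a : ℕ, n.stmt = .form (.atom a) →
      ∃ j < d.length, j % 2 = 1 ∧ d[j]!.stmt = .form (.atom a)) ∧
    (z = true → d.length % 2 = 1 → ∀ i < d.length, d[i]!.ref ≠ some (m, true))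

theorem sdf_append (φ : Formula) (d : List Move) (n : Move) (hd : 0 < d.length) :
    SDialogueFor NRules φ (d ++ [n]) ↔ SDialogueFor NRules φ d ∧ StepOK d n := by
  have hL := getB_append_left d n
  have hR := getB_append_last d n
  have hlen : (d ++ [n]).length = d.length + 1 := by simp
  constructor
  · rintro ⟨⟨h0, h1⟩, ⟨h10, h13⟩, hc⟩
    rw [hlen] at h0 h1
    unfold RuleD10 at h10
    unfold RuleD13 at h13
    unfold CommencesWith at hc
    rw [hlen] at h10 h13 hc
    refine ⟨⟨⟨?_, ?_⟩, ⟨?_, ?_⟩, ?_⟩, ?_⟩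
    · intro h
      have := h0 (by omega)
      rwa [hL 0 h] at this
    · intro i hi hid
      obtain ⟨m, z, hr, hm, hp, ha, hdf⟩ := h1 i hi (by omega)
      rw [hL i hid] at hr ha hdf
      rw [hL m (by omega)] at ha hdf
      refine ⟨m, z, hr, hm, hp, ha, ?_⟩
      intro hz
      obtain ⟨k, φ', h1, h2, h3, h4⟩ := hdf hz
      rw [hL k (by omega)] at h3
      exact ⟨k, φ', h1, h2, h3, h4⟩
    · intro i hi hp a ha
      obtain ⟨j, hj, hjp, hja⟩ := h10 i (by omega) hp a (by rw [hL i hi]; exact ha)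
      rw [hL j (by omega)] at hja
      exact ⟨j, hj, hjp, hja⟩
    · intro m hm i hi j hj hri hrj
      exact h13 m hm i (by omega) j (by omega) (by rw [hL i hi]; exact hri)
        (by rw [hL j hj]; exact hrj)
    · refine ⟨hd, ?_⟩
      have := hc.2
      rwa [hL 0 hd] at this
    · obtain ⟨m, z, hr, hm, hp, ha, hdf⟩ := h1 d.length hd (by omega)
      rw [hR] at hr ha hdf
      rw [hL m (by omega)] at ha hdf
      refine ⟨m, z, hr, hm, hp, ha, ?_, ?_, ?_⟩
      · intro hz
        obtain ⟨k, φ', h1, h2, h3, h4⟩ := hdf hz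
        rw [hL k (by omega)] at h3
        exact ⟨k, φ', h1, h2, h3, h4⟩
      · intro hp a ha
        obtain ⟨j, hj, hjp, hja⟩ := h10 d.length (by omega) hp a (by rw [hR]; exact ha)
        rw [hL j (by omega)] at hja
        exact ⟨j, hj, hjp, hja⟩
      · intro hz hl i hi hri
        subst hz
        have := h13 m (by omega) i (by omega) d.length (by omega) (by rw [hL i hi]; exact hri)
          (by rw [hR]; exact hr)
        omega
  · rintro ⟨⟨⟨h0, h1⟩, ⟨h10, h13⟩, hc⟩, m, z, hr, hm, hp, ha, hdf, hat, hat13⟩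
    refine ⟨⟨?_, ?_⟩, ⟨?_, ?_⟩, ?_⟩
    · intro h
      rw [hL 0 hd]
      exact h0 hd
    · intro i hi hid
      rw [hlen] at hid
      rcases Nat.lt_succ_iff_lt_or_eq.1 hid with hid | rfl
      · obtain ⟨m, z, hr, hm, hp, ha, hdf⟩ := h1 i hi hid
        refine ⟨m, z, by rw [hL i hid]; exact hr, hm, hp, ?_, ?_⟩
        · rw [hL i hid, hL m (by omega)]; exact ha
        · rw [hL i hid, hL m (by omega)]
          intro hz
          obtain ⟨k, φ', h1, h2, h3, h4⟩ := hdf hz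
          exact ⟨k, φ', h1, h2, by rw [hL k (by omega)]; exact h3, h4⟩
      · refine ⟨m, z, by rw [hR]; exact hr, hm, hp, ?_, ?_⟩
        · rw [hR, hL m hm]; exact ha
        · rw [hR, hL m hm]
          intro hz
          obtain ⟨k, φ', h1, h2, h3, h4⟩ := hdf hz
          exact ⟨k, φ', h1, h2, by rw [hL k (by omega)]; exact h3, h4⟩
    · intro i hi hp a hia
      rw [hlen] at hi
      rcases Nat.lt_succ_iff_lt_or_eq.1 hi with hi | rfl
      · rw [hL i hi] at hia
        obtain ⟨j, hj, hjp, hja⟩ := h10 i hi hp a hia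
        exact ⟨j, hj, hjp, by rw [hL j (by omega)]; exact hja⟩
      · rw [hR] at hia
        obtain ⟨j, hj, hjp, hja⟩ := hat hp a hia
        exact ⟨j, hj, hjp, by rw [hL j (by omega)]; exact hja⟩
    · intro q hq i hi j hj hri hrj
      rw [hlen] at hi hj
      have key : ∀ i < d.length, d[i]!.ref = some (q, true) → n.ref = some (q, true) → False := by
        intro i hi h1 h2
        rw [hr] at h2
        simp only [Option.some.injEq, Prod.mk.injEq] at h2
        obtain ⟨rfl, rfl⟩ := h2
        exact hat13 rfl (by omega) i hi h1
      rcases Nat.lt_succ_iff_lt_or_eq.1 hi with hi | rfl <;>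
      rcases Nat.lt_succ_iff_lt_or_eq.1 hj with hj | rfl
      · rw [hL i hi] at hri
        rw [hL j hj] at hrj
        exact h13 q hq i hi j hj hri hrj
      · rw [hL i hi] at hri
        rw [hR] at hrj
        exact (key i hi hri hrj).elim
      · rw [hL j hj] at hrj
        rw [hR] at hri
        exact (key j hj hrj hri).elim
      · rfl
    · exact ⟨by omega, by rw [hL 0 hd]; exact hc.2⟩

/-- P, to move at `e`, can force a win. -/
inductive WinP (φ : Formula) : List Move → Prop
  | mk (e : List Move) (m' : Move) (h : SDialogueFor NRules φ (e ++ [m']))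
      (hw : ∀ m, SDialogueFor NRules φ (e ++ [m'] ++ [m]) → WinP φ (e ++ [m'] ++ [m])) :
      WinP φ e

/-- Ranked version of `WinP`. -/
inductive WinR (φ : Formula) : Ordinal.{0} → List Move → Prop
  | mk (α : Ordinal.{0}) (e : List Move) (m' : Move) (b : Move → Ordinal.{0})
      (h : SDialogueFor NRules φ (e ++ [m']))
      (hb : ∀ m, SDialogueFor NRules φ (e ++ [m'] ++ [m]) → b m < α)
      (hw : ∀ m, SDialogueFor NRules φ (e ++ [m'] ++ [m]) → WinR φ (b m) (e ++ [m'] ++ [m])) :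
      WinR φ α e

theorem winR_of_winP (φ : Formula) (e : List Move) (h : WinP φ e) : ∃ α, WinR φ α e := by
  induction h with
  | mk e m' h hw ih =>
    have : ∀ m, ∃ α, SDialogueFor NRules φ (e ++ [m'] ++ [m]) → WinR φ α (e ++ [m'] ++ [m]) := by
      intro m
      by_cases hm : SDialogueFor NRules φ (e ++ [m'] ++ [m])
      · obtain ⟨α, hα⟩ := ih m hm
        exact ⟨α, fun _ => hα⟩
      · exact ⟨0, fun h => absurd h hm⟩
    choose b hb using this
    refine ⟨⨆ m, Order.succ (b m), WinR.mk _ e m' b h ?_ hb⟩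
    intro m _
    exact lt_of_lt_of_le (Order.lt_succ (b m)) (Ordinal.le_iSup (fun m => Order.succ (b m)) m)

theorem exists_strat (φ : Formula) : ∃ (σ : List Move → Move) (rk : List Move → Ordinal.{0}),
    ∀ e, (∃ α, WinR φ α e) → SDialogueFor NRules φ (e ++ [σ e]) ∧
      ∀ m, SDialogueFor NRules φ (e ++ [σ e] ++ [m]) →
        (∃ α, WinR φ α (e ++ [σ e] ++ [m])) ∧ rk (e ++ [σ e] ++ [m]) < rk e := by
  classical
  let rk : List Move → Ordinal.{0} := fun e => sInf {α | WinR φ α e}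
  have : ∀ e, ∃ s : Move, (∃ α, WinR φ α e) → SDialogueFor NRules φ (e ++ [s]) ∧
      ∀ m, SDialogueFor NRules φ (e ++ [s] ++ [m]) →
        (∃ α, WinR φ α (e ++ [s] ++ [m])) ∧ rk (e ++ [s] ++ [m]) < rk e := by
    intro e
    by_cases he : ∃ α, WinR φ α e
    · have h1 : WinR φ (rk e) e := csInf_mem (s := {α | WinR φ α e}) he
      cases h1 with
      | mk _ _ m' b h hb hw =>
        refine ⟨m', fun _ => ⟨h, fun m hm => ⟨⟨_, hw m hm⟩, ?_⟩⟩⟩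
        exact lt_of_le_of_lt (csInf_le' (hw m hm)) (hb m hm)
    · exact ⟨default, fun h => absurd h he⟩
  choose σ hσ using this
  exact ⟨σ, rk, hσ⟩

/-- The tree generated by a strategy function. -/
inductive STree (φ : Formula) (σ : List Move → Move) : List Move → Prop
  | root : STree φ σ [⟨.form φ, none⟩]
  | o (d : List Move) (m : Move) (h : STree φ σ d) (hl : d.length % 2 = 1)
      (hs : SDialogueFor NRules φ (d ++ [m])) : STree φ σ (d ++ [m])
  | p (d : List Move) (h : STree φ σ d) (hl : d.length % 2 = 0) : STree φ σ (d ++ [σ d])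

theorem STree.length_pos {φ : Formula} {σ : List Move → Move} {d : List Move}
    (h : STree φ σ d) : 0 < d.length := by
  cases h <;> simp

theorem STree.child {φ : Formula} {σ : List Move → Move} {d e : List Move} {m : Move}
    (h : STree φ σ e) (he : e = d ++ [m]) (hd : 0 < d.length) :
    STree φ σ d ∧ (d.length % 2 = 0 → m = σ d) := by
  cases h with
  | root =>
    have := congrArg List.length he
    simp at this
    simp [this] at hd
  | o d' m' h hl hs =>
    obtain ⟨rfl, h2⟩ := List.append_inj' he rfl
    exact ⟨h, fun h => by omega⟩
  | p d' h hl =>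
    obtain ⟨rfl, h2⟩ := List.append_inj' he rfl
    simp at h2
    exact ⟨h, fun _ => h2.symm⟩

theorem nvalid_of_winP (φ : Formula) (h0 : SDialogueFor NRules φ [⟨.form φ, none⟩])
    (hw : ∀ m, SDialogueFor NRules φ ([⟨.form φ, none⟩] ++ [m]) →
      WinP φ ([⟨.form φ, none⟩] ++ [m])) : NValid φ := by
  obtain ⟨σ, rk, hσ⟩ := exists_strat φ
  have inv : ∀ d, STree φ σ d → SDialogueFor NRules φ d ∧
      (d.length % 2 = 1 → ∀ m, SDialogueFor NRules φ (d ++ [m]) → ∃ α, WinR φ α (d ++ [m])) ∧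
      (d.length % 2 = 0 → ∃ α, WinR φ α d) := by
    intro d hd
    induction hd with
    | root => exact ⟨h0, fun _ m hm => winR_of_winP _ _ (hw m hm), fun h => by simp at h⟩
    | o d m h hl hs ih =>
      refine ⟨hs, fun h => ?_, fun _ => ih.2.1 hl m hs⟩
      simp at h; omega
    | p d h hl ih =>
      have := hσ d (ih.2.2 hl)
      refine ⟨this.1, fun _ m hm => (this.2 m hm).1, fun h => ?_⟩
      simp at h; omega
  refine ⟨{d | STree φ σ d}, ?_, ?_, ?_, ?_, ?_, ?_, ?_⟩
  · exact ⟨_, STree.root⟩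
  · exact fun d hd => (inv d hd).1
  · intro d hd
    have hd' : STree φ σ d := hd
    clear hd
    induction hd' with
    | root =>
      intro e he hl
      obtain ⟨t, ht⟩ := he
      have : e = [⟨.form φ, none⟩] := by
        cases e with
        | nil => simp at hl
        | cons a l => simp at ht; simp [ht]
      rw [this]; exact STree.root
    | o d m h hl hs ih =>
      intro e he hp
      rcases List.prefix_concat_iff.1 he with rfl | he
      · exact STree.o d m h hl hs
      · exact ih e he hp
    | p d h hl ih =>
      intro e he hp
      rcases List.prefix_concat_iff.1 he with rfl | he
      · exact STree.p d h hl
      · exact ih e he hp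
  · intro d hd hm
    have hd' : STree φ σ d := hd
    rcases Nat.mod_two_eq_zero_or_one d.length with hl | hl
    · exact absurd (STree.p d hd' hl) (hm _)
    · exact ⟨(inv d hd).1, hl, fun m hs => hm m (STree.o d m hd' hl hs)⟩
  · intro f
    by_contra hcon
    push Not at hcon
    have hP : ∀ n, List.ofFn (fun i : Fin (n + 1) => f i) =
        List.ofFn (fun i : Fin n => f i) ++ [f n] := by
      intro n
      rw [List.ofFn_succ', List.concat_eq_append]
      simp
    have key : ∀ α : Ordinal.{0}, ∀ k, rk (List.ofFn (fun i : Fin (2 * k + 2) => f i)) = α →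
        False := by
      intro α
      induction α using WellFoundedLT.induction with
      | ind α ih =>
        intro k hk
        have t0 : STree φ σ _ := hcon (2 * k + 2) (by omega)
        have t1 : STree φ σ _ := hcon (2 * k + 2 + 1) (by omega)
        have t2 : STree φ σ _ := hcon (2 * k + 2 + 1 + 1) (by omega)
        have hm := (t1.child (hP _) (by simp)).2 (by rw [List.length_ofFn]; omega)
        have e2 := hP (2 * k + 2 + 1)
        rw [hP (2 * k + 2), hm] at e2
        have hw0 := (inv _ t0).2.2 (by rw [List.length_ofFn]; omega)
        have := (hσ _ hw0).2 (f (2 * k + 2 + 1)) (by rw [← e2]; exact (inv _ t2).1)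
        rw [← e2, hk] at this
        exact ih _ this.2 (k + 1) rfl
    exact key _ 0 rfl
  · intro d hd hp hl
    exact ⟨σ d, STree.p d hd hl, fun m hm => (STree.child hm rfl hp).2 hl⟩
  · intro d hd hl m hm
    exact STree.o d m hd hl hm

theorem winP_of_nvalid (φ : Formula) (h : NValid φ) :
    SDialogueFor NRules φ [⟨.form φ, none⟩] ∧
    ∀ m, SDialogueFor NRules φ ([⟨.form φ, none⟩] ++ [m]) →
      WinP φ ([⟨.form φ, none⟩] ++ [m]) := by
  obtain ⟨T, hT⟩ := h
  have hroot : [⟨.form φ, none⟩] ∈ T := by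
    obtain ⟨d, hd⟩ := hT.nonempty
    obtain ⟨h1, h2, h3⟩ := hT.dialogues d hd
    obtain ⟨hr, -⟩ := h1.1 h3.1
    have hs := h3.2
    cases d with
    | nil => exact absurd h3.1 (by simp)
    | cons a l =>
      have := hT.prefix_closed _ hd [a] ⟨l, rfl⟩ (by simp)
      simp at hr hs
      have ha : a = ⟨.form φ, none⟩ := by cases a; simp_all
      rwa [ha] at this
  have main : ∀ d ∈ T, 0 < d.length → d.length % 2 = 0 → WinP φ d := by
    intro d0 hd0 hp0 hl0
    by_contra hn0
    have step : ∀ d : {d : List Move // d ∈ T ∧ 0 < d.length ∧ d.length % 2 = 0 ∧ ¬ WinP φ d},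
        ∃ d' : {d : List Move // d ∈ T ∧ 0 < d.length ∧ d.length % 2 = 0 ∧ ¬ WinP φ d},
          ∃ a b, d'.1 = d.1 ++ [a] ++ [b] := by
      rintro ⟨d, hd, hp, hl, hn⟩
      obtain ⟨m', hm', -⟩ := hT.odd_unique_child d hd hp hl
      by_contra hcon
      apply hn
      refine WinP.mk d m' (hT.dialogues _ hm') ?_
      intro m hm
      by_contra hnm
      refine hcon ⟨⟨d ++ [m'] ++ [m], ?_, by simp, by simp; omega, hnm⟩, m', m, rfl⟩
      exact hT.even_all_children _ hm' (by simp; omega) m hm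
    choose nxt hnxt using step
    let D : ℕ → {d : List Move // d ∈ T ∧ 0 < d.length ∧ d.length % 2 = 0 ∧ ¬ WinP φ d} :=
      fun n => nxt^[n] ⟨d0, hd0, hp0, hl0, hn0⟩
    have hD : ∀ n, ∃ a b, (D (n + 1)).1 = (D n).1 ++ [a] ++ [b] := by
      intro n
      have := hnxt (D n)
      simpa only [D, Function.iterate_succ_apply'] using this
    have hlen : ∀ n, n < (D n).1.length := by
      intro n
      induction n with
      | zero => exact hp0
      | succ n ih =>
        obtain ⟨a, b, hab⟩ := hD n
        rw [hab]; simp; omega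
    have hmono : ∀ i j, i ≤ j → (D i).1 <+: (D j).1 := by
      intro i j hij
      induction hij with
      | refl => exact List.prefix_rfl
      | step _ ih =>
        rename_i k _
        obtain ⟨a, b, hab⟩ := hD k
        rw [hab, List.append_assoc]
        exact ih.trans (List.prefix_append _ _)
    obtain ⟨n, hn, hnT⟩ := hT.no_infinite_branch (fun i => (D i).1[i]!)
    apply hnT
    have : (List.ofFn fun i : Fin n => (D i).1[(i : ℕ)]!) = (D n).1.take n := by
      apply List.ext_getElem
      · have := hlen n
        simp; omega
      · intro i h1 h2
        have hi : i < n := by simpa using h1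
        have hh := hlen i
        simp only [List.getElem_ofFn, List.getElem_take]
        rw [getElem!_pos (D i).1 i hh]
        exact (hmono i n hi.le).getElem hh
    rw [this]
    refine hT.prefix_closed _ (D n).2.1 _ (List.take_prefix _ _) ?_
    have := hlen n
    simp; omega
  refine ⟨hT.dialogues _ hroot, fun m hm => main _ ?_ (by simp) (by simp)⟩
  exact hT.even_all_children _ hroot (by simp) m hm

/-- If P ever made a defensible attack, P cannot force a win. -/
theorem not_winP_of_defensible (φ : Formula) (e : List Move) (hw : WinP φ e) :
    0 < e.length → e.length % 2 = 0 →
    (∃ (i k : ℕ) (χ : Formula) (s : Statement), i < e.length ∧ i % 2 = 0 ∧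
      e[i]!.ref = some (k, true) ∧ k < i ∧ e[k]!.stmt = .form χ ∧ Defends s e[i]!.stmt χ) →
    False := by
  induction hw with
  | mk e m' h hw ih =>
    rintro hp hl ⟨i, k, χ, s, hi, hip, hr, hk, hχ, hs⟩
    have hL := getB_append_left e m'
    have hL2 : ∀ m, ∀ j < e.length, (e ++ [m'] ++ [m])[j]! = e[j]! := by
      intro m j hj
      rw [getB_append_left _ _ _ (by simp; omega), hL j hj]
    have hd : SDialogueFor NRules φ (e ++ [m'] ++ [⟨s, some (i, false)⟩]) := by
      rw [sdf_append _ _ _ (by simp)]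
      refine ⟨h, i, false, rfl, by simp; omega, by simp; omega, by simp, ?_, ?_, by simp⟩
      · intro _
        refine ⟨k, χ, ?_, hk, ?_, ?_⟩
        · rw [hL i hi]; exact hr
        · rw [hL k (by omega)]; exact hχ
        · rw [hL i hi]; exact hs
      · intro h; simp at h; omega
    refine ih _ hd (by simp) (by simp; omega) ⟨i, k, χ, s, by simp; omega, hip, ?_, hk, ?_, ?_⟩
    · rw [hL2 _ i hi]; exact hr
    · rw [hL2 _ k (by omega)]; exact hχ
    · rw [hL2 _ i hi]; exact hs

/-- Simulation relation. -/
structure Sim (ψ : Formula) (e d : List Move) (g h : ℕ → ℕ) : Prop where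
  de : SDialogueFor NRules (.neg (.neg ψ)) e
  dd : SDialogueFor NRules ψ d
  le : 4 ≤ e.length
  ld : 2 ≤ d.length
  pe : e.length % 2 = 0
  pd : d.length % 2 = 0
  e0 : e[0]!.stmt = .form (.neg (.neg ψ))
  e1 : e[1]! = ⟨.form (.neg ψ), some (0, true)⟩
  d1 : d[1]!.ref = some (0, true)
  I1 : ∀ j, 2 ≤ j → j < e.length → g j < d.length ∧ g j % 2 = j % 2 ∧ d[g j]!.stmt = e[j]!.stmt
  I2 : ∀ j, 3 ≤ j → j < e.length → j % 2 = 1 → ∃ k z, e[j]!.ref = some (k, z) ∧ 2 ≤ k ∧ k < j ∧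
    d[g j]!.ref = some (g k, z)
  I3 : ∀ i, i < d.length → 2 ≤ h i ∧ h i < e.length ∧ h i % 2 = i % 2 ∧ g (h i) = i
  I4 : ∀ i, 2 ≤ i → i < d.length → i % 2 = 0 → ∃ k z, e[h i]!.ref = some (k, z) ∧ 2 ≤ k ∧
    k < h i ∧ d[i]!.ref = some (g k, z)

theorem getB2_left (d : List Move) (a b : Move) (i : ℕ) (h : i < d.length) :
    (d ++ [a] ++ [b])[i]! = d[i]! := by
  rw [getB_append_left _ _ _ (by simp; omega), getB_append_left _ _ _ h]

theorem getB2_mid (d : List Move) (a b : Move) : (d ++ [a] ++ [b])[d.length]! = a := by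
  rw [getB_append_left _ _ _ (by simp), getB_append_last]

theorem getB2_last (d : List Move) (a b : Move) : (d ++ [a] ++ [b])[d.length + 1]! = b := by
  have := getB_append_last (d ++ [a]) b
  simpa using this

/-- Extension of an index map by two new values. -/
def ext2 (g : ℕ → ℕ) (n a b : ℕ) : ℕ → ℕ :=
  fun j => if j < n then g j else if j = n then a else b

theorem ext2_lt {g : ℕ → ℕ} {n a b j : ℕ} (h : j < n) : ext2 g n a b j = g j := by
  simp [ext2, h]

theorem ext2_mid {g : ℕ → ℕ} {n a b : ℕ} : ext2 g n a b n = a := by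
  simp [ext2]

theorem ext2_last {g : ℕ → ℕ} {n a b : ℕ} : ext2 g n a b (n + 1) = b := by
  simp [ext2]

theorem lt_add_two_cases {j n : ℕ} (h : j < n + 2) : j < n ∨ j = n ∨ j = n + 1 := by omega

/-- P repeats the attack on `¬ψ`; O repeats the attack on `ψ`. -/
theorem Sim.repeat_step {ψ : Formula} {e d : List Move} {g h : ℕ → ℕ} (S : Sim ψ e d g h)
    (hm : SDialogueFor NRules (.neg (.neg ψ)) (e ++ [⟨.form ψ, some (1, true)⟩])) :
    Sim ψ (e ++ [⟨.form ψ, some (1, true)⟩] ++ [⟨d[1]!.stmt, some (e.length, true)⟩]) d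
      (ext2 g e.length 0 1) h := by
  have hle := S.le
  have hld := S.ld
  have hpe := S.pe
  have hpd := S.pd
  have d0 : d[0]!.stmt = .form ψ := S.dd.2.2.2
  set a : Move := ⟨.form ψ, some (1, true)⟩ with ha
  set b : Move := ⟨d[1]!.stmt, some (e.length, true)⟩ with hb
  have hlen : (e ++ [a] ++ [b]).length = e.length + 2 := by simp
  have L := getB2_left e a b
  have M := getB2_mid e a b
  have R := getB2_last e a b
  constructor
  · rw [sdf_append _ _ _ (by simp)]
    refine ⟨hm, e.length, true, rfl, by simp, by simp; omega, ?_, by simp, ?_, ?_⟩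
    · intro _
      rw [getB_append_last]
      obtain ⟨m, z, hr, hlt, hp, hat, -⟩ := S.dd.1.2 1 (by omega) (by omega)
      rw [S.d1] at hr
      simp only [Option.some.injEq, Prod.mk.injEq] at hr
      obtain ⟨rfl, rfl⟩ := hr
      obtain ⟨χ, h1, h2, h3⟩ := hat rfl
      rw [d0] at h1
      cases h1
      exact ⟨ψ, rfl, h2, h3⟩
    · intro h; simp at h; omega
    · intro _ _ i hi hri
      simp at hi
      rcases Nat.lt_or_eq_of_le hi with hi | rfl
      · rw [getB_append_left _ _ _ hi] at hri
        rcases Nat.eq_zero_or_pos i with rfl | hpos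
        · have := (S.de.1.1 (by omega)).1
          rw [this] at hri
          simp at hri
        · obtain ⟨m, z, hr, hlt, -⟩ := S.de.1.2 i hpos hi
          rw [hr] at hri
          simp at hri
          omega
      · rw [getB_append_last] at hri
        simp [ha] at hri
        omega
  · exact S.dd
  · omega
  · exact hld
  · omega
  · exact hpd
  · rw [L 0 (by omega)]; exact S.e0
  · rw [L 1 (by omega)]; exact S.e1
  · exact S.d1
  · intro j h2 hj
    rw [hlen] at hj
    rcases lt_add_two_cases hj with hj | rfl | rfl
    · rw [ext2_lt hj, L j hj]
      exact S.I1 j h2 hj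
    · rw [ext2_mid, M]
      exact ⟨by omega, by omega, d0⟩
    · rw [ext2_last, R]
      exact ⟨by omega, by omega, rfl⟩
  · intro j h3 hj hp
    rw [hlen] at hj
    rcases lt_add_two_cases hj with hj | rfl | rfl
    · obtain ⟨k, z, h1, h2, h3, h4⟩ := S.I2 j h3 hj hp
      refine ⟨k, z, by rw [L j hj]; exact h1, h2, h3, ?_⟩
      rw [ext2_lt hj, ext2_lt (by omega)]
      exact h4
    · omega
    · refine ⟨e.length, true, by rw [R], by omega, by omega, ?_⟩
      rw [ext2_last, ext2_mid]
      exact S.d1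
  · intro i hi
    obtain ⟨h1, h2, h3, h4⟩ := S.I3 i hi
    refine ⟨h1, by omega, h3, ?_⟩
    rw [ext2_lt h2]; exact h4
  · intro i h2 hi hp
    obtain ⟨h1', h2', h3', h4'⟩ := S.I3 i hi
    obtain ⟨k, z, h1, h2, h3, h4⟩ := S.I4 i h2 hi hp
    refine ⟨k, z, by rw [L _ h2']; exact h1, h2, h3, ?_⟩
    rw [ext2_lt (by omega)]; exact h4

/-- P's non-repeating move is translated. -/
theorem Sim.p_step {ψ : Formula} {e d : List Move} {g h : ℕ → ℕ} (S : Sim ψ e d g h)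
    {m : ℕ} {z : Bool} {s : Statement} (h3 : 3 ≤ m)
    (hm : SDialogueFor NRules (.neg (.neg ψ)) (e ++ [⟨s, some (m, z)⟩])) :
    SDialogueFor NRules ψ (d ++ [⟨s, some (g m, z)⟩]) := by
  have hle := S.le
  have hld := S.ld
  have hpe := S.pe
  have hpd := S.pd
  rw [sdf_append _ _ _ (by omega)] at hm ⊢
  obtain ⟨-, m', z', hr, hlt, hp, hat, hdf, hat0, -⟩ := hm
  simp only [Option.some.injEq, Prod.mk.injEq] at hr
  obtain ⟨rfl, rfl⟩ := hr
  obtain ⟨i1, i2, i3⟩ := S.I1 m (by omega) hlt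
  refine ⟨S.dd, g m, z, rfl, i1, by omega, ?_, ?_, ?_, ?_⟩
  · rw [i3]; exact hat
  · intro hz
    obtain ⟨k, χ, h1, h2, h3', h4⟩ := hdf hz
    obtain ⟨k', z', j1, j2, j3, j4⟩ := S.I2 m h3 hlt (by omega)
    rw [h1] at j1
    simp only [Option.some.injEq, Prod.mk.injEq] at j1
    obtain ⟨rfl, rfl⟩ := j1
    have hk := (S.I1 k j2 (by omega))
    obtain ⟨q, w, hq, hqlt, -⟩ := S.dd.1.2 (g m) (by omega) i1
    rw [j4] at hq
    simp only [Option.some.injEq, Prod.mk.injEq] at hq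
    obtain ⟨rfl, rfl⟩ := hq
    exact ⟨g k, χ, j4, hqlt, by rw [hk.2.2]; exact h3', by rw [i3]; exact h4⟩
  · intro _ a ha
    obtain ⟨j, hj, hjp, hja⟩ := hat0 hpe a ha
    have : j ≠ 1 := by
      rintro rfl
      rw [S.e1] at hja
      simp at hja
    obtain ⟨j1, j2, j3⟩ := S.I1 j (by omega) hj
    exact ⟨g j, j1, by omega, by rw [j3]; exact hja⟩
  · intro _ h; omega

/-- O's reply is translated back. -/
theorem Sim.o_step {ψ : Formula} {e d : List Move} {g h : ℕ → ℕ} (S : Sim ψ e d g h)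
    {m q : ℕ} {z w : Bool} {s t : Statement} (h3 : 3 ≤ m)
    (hm : SDialogueFor NRules (.neg (.neg ψ)) (e ++ [⟨s, some (m, z)⟩]))
    (hn : SDialogueFor NRules ψ (d ++ [⟨s, some (g m, z)⟩] ++ [⟨t, some (q, w)⟩])) :
    Sim ψ (e ++ [⟨s, some (m, z)⟩] ++ [⟨t, some (ext2 h d.length e.length (e.length + 1) q, w)⟩])
      (d ++ [⟨s, some (g m, z)⟩] ++ [⟨t, some (q, w)⟩])
      (ext2 g e.length d.length (d.length + 1)) (ext2 h d.length e.length (e.length + 1)) := by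
  have hle := S.le
  have hld := S.ld
  have hpe := S.pe
  have hpd := S.pd
  have hmlt : m < e.length := by
    rw [sdf_append _ _ _ (by omega)] at hm
    obtain ⟨-, m', z', hr, hlt, -⟩ := hm
    simp only [Option.some.injEq, Prod.mk.injEq] at hr
    omega
  set a : Move := ⟨s, some (m, z)⟩ with ha
  set a' : Move := ⟨s, some (g m, z)⟩ with ha'
  set b' : Move := ⟨t, some (q, w)⟩ with hb'
  set h' := ext2 h d.length e.length (e.length + 1) with hh'
  set g' := ext2 g e.length d.length (d.length + 1) with hg'
  set b : Move := ⟨t, some (h' q, w)⟩ with hb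
  have hlen : (e ++ [a] ++ [b]).length = e.length + 2 := by simp
  have hlen' : (d ++ [a'] ++ [b']).length = d.length + 2 := by simp
  have L := getB2_left e a b
  have M := getB2_mid e a b
  have R := getB2_last e a b
  have L' := getB2_left d a' b'
  have M' := getB2_mid d a' b'
  have R' := getB2_last d a' b'
  have I1 : ∀ j, 2 ≤ j → j < e.length + 2 → g' j < d.length + 2 ∧ g' j % 2 = j % 2 ∧
      (d ++ [a'] ++ [b'])[g' j]!.stmt = (e ++ [a] ++ [b])[j]!.stmt := by
    intro j h2 hj
    rcases lt_add_two_cases hj with hj | rfl | rfl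
    · obtain ⟨i1, i2, i3⟩ := S.I1 j h2 hj
      rw [hg', ext2_lt hj, L j hj, L' _ i1]
      exact ⟨by omega, i2, i3⟩
    · rw [hg', ext2_mid, M, M']
      exact ⟨by omega, by omega, rfl⟩
    · rw [hg', ext2_last, R, R']
      exact ⟨by omega, by omega, rfl⟩
  have I3 : ∀ i, i < d.length + 2 → 2 ≤ h' i ∧ h' i < e.length + 2 ∧ h' i % 2 = i % 2 ∧
      g' (h' i) = i := by
    intro i hi
    rcases lt_add_two_cases hi with hi | rfl | rfl
    · obtain ⟨i1, i2, i3, i4⟩ := S.I3 i hi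
      rw [hh', ext2_lt hi, hg', ext2_lt i2]
      exact ⟨i1, by omega, i3, i4⟩
    · rw [hh', ext2_mid, hg', ext2_mid]
      exact ⟨by omega, by omega, by omega, rfl⟩
    · rw [hh', ext2_last, hg', ext2_last]
      exact ⟨by omega, by omega, by omega, rfl⟩
  have I4 : ∀ i, 2 ≤ i → i < d.length + 2 → i % 2 = 0 → ∃ k z,
      (e ++ [a] ++ [b])[h' i]!.ref = some (k, z) ∧ 2 ≤ k ∧
      k < h' i ∧ (d ++ [a'] ++ [b'])[i]!.ref = some (g' k, z) := by
    intro i h2 hi hp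
    rcases lt_add_two_cases hi with hi | rfl | rfl
    · obtain ⟨i1, i2, i3, i4⟩ := S.I3 i hi
      obtain ⟨k, z, j1, j2, j3, j4⟩ := S.I4 i h2 hi hp
      rw [hh', ext2_lt hi, L _ i2, L' _ hi]
      refine ⟨k, z, j1, j2, j3, ?_⟩
      rw [hg', ext2_lt (by omega)]; exact j4
    · rw [hh', ext2_mid, M, M']
      refine ⟨m, z, rfl, by omega, hmlt, ?_⟩
      rw [hg', ext2_lt hmlt]
    · omega
  -- facts about the O-reply
  have hn' := hn
  rw [sdf_append _ _ _ (by simp)] at hn'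
  obtain ⟨hd1, q', w', hr, hqlt, hqp, hat, hdf, -, h13⟩ := hn'
  simp only [hb', Option.some.injEq, Prod.mk.injEq] at hr
  obtain ⟨rfl, rfl⟩ := hr
  simp at hqlt hqp h13
  have hqlt' : q < d.length + 1 := by omega
  obtain ⟨q1, q2, q3, q4⟩ := I3 q (by omega)
  have hq5 : h' q < e.length + 1 := by omega
  have hstq := (I1 (h' q) q1 q2).2.2
  rw [q4] at hstq
  have l1 : ∀ j < d.length + 1, (d ++ [a'] ++ [b'])[j]! = (d ++ [a'])[j]! := fun j hj =>
    getB_append_left _ _ _ (by simpa using hj)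
  have l2 : ∀ j < e.length + 1, (e ++ [a] ++ [b])[j]! = (e ++ [a])[j]! := fun j hj =>
    getB_append_left _ _ _ (by simpa using hj)
  have hstq2 := hstq
  rw [l1 _ hqlt', l2 _ hq5] at hstq2
  constructor
  · rw [sdf_append _ _ _ (by simp)]
    refine ⟨hm, h' q, w, rfl, by simp; omega, by simp; omega, ?_, ?_, ?_, ?_⟩
    · intro hw
      rw [← hstq2]
      exact hat hw
    · intro hw
      obtain ⟨k, χ, j1, j2, j3, j4⟩ := hdf hw
      have hq0 : q ≠ 0 := by
        rintro rfl
        have := (hd1.1.1 (by simp)).1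
        rw [this] at j1
        simp at j1
      obtain ⟨k', z', p1, p2, p3, p4⟩ := I4 q (by omega) (by omega) (by omega)
      rw [l2 _ hq5] at p1
      rw [l1 _ hqlt', j1] at p4
      simp only [Option.some.injEq, Prod.mk.injEq] at p4
      obtain ⟨rfl, rfl⟩ := p4
      have hk := (I1 k' p2 (by omega)).2.2
      rw [l1 _ (by omega), l2 _ (by omega)] at hk
      exact ⟨k', χ, p1, p3, by rw [← hk]; exact j3, by rw [← hstq2]; exact j4⟩
    · intro h; simp at h; omega
    · intro hw _ i hi hri
      simp at hi
      have hip : i % 2 = 1 ∧ i < e.length := by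
        obtain ⟨m1, z1, r1, r2, r3, -⟩ := hm.1.2 i (by
          rcases Nat.eq_zero_or_pos i with rfl | hpos
          · have := (hm.1.1 (by simp)).1
            rw [this] at hri
            simp at hri
          · exact hpos) (by simpa using hi)
        rw [r1] at hri
        simp only [Option.some.injEq, Prod.mk.injEq] at hri
        omega
      obtain ⟨hip, hie⟩ := hip
      rw [getB_append_left _ _ _ hie] at hri
      rcases Nat.lt_or_ge i 3 with hi3 | hi3
      · have : i = 1 := by omega
        subst this
        rw [S.e1] at hri
        simp only [Option.some.injEq, Prod.mk.injEq] at hri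
        omega
      · obtain ⟨k, z1, p1, p2, p3, p4⟩ := S.I2 i hi3 hie hip
        rw [hri] at p1
        simp only [Option.some.injEq, Prod.mk.injEq] at p1
        obtain ⟨rfl, rfl⟩ := p1
        have hgi := (S.I1 i (by omega) hie).1
        have hgq : g (h' q) = q := by
          rw [hg', ext2_lt (by omega)] at q4
          exact q4
        rw [hgq] at p4
        refine h13 hw (by omega) (g i) (by omega) ?_
        have := getB_append_left d a' _ hgi
        simp only [List.getElem!_eq_getElem?_getD] at this p4 ⊢
        rw [this]; exact p4
  · exact hn
  · omega
  · omega
  · omega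
  · omega
  · rw [L 0 (by omega)]; exact S.e0
  · rw [L 1 (by omega)]; exact S.e1
  · rw [L' 1 (by omega)]; exact S.d1
  · rw [hlen, hlen']; exact I1
  · intro j h3 hj hp
    rw [hlen] at hj
    rcases lt_add_two_cases hj with hj | rfl | rfl
    · obtain ⟨k, z, j1, j2, j3, j4⟩ := S.I2 j h3 hj hp
      refine ⟨k, z, by rw [L j hj]; exact j1, j2, j3, ?_⟩
      rw [hg', ext2_lt hj, ext2_lt (by omega), L' _ (S.I1 j (by omega) hj).1]
      exact j4
    · omega
    · refine ⟨h' q, w, by rw [R], q1, hq5, ?_⟩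
      rw [q4, hg', ext2_last, R']
  · rw [hlen, hlen']; exact I3
  · rw [hlen']; exact I4

theorem winP_of_sim (ψ : Formula) (e : List Move) (hw : WinP (.neg (.neg ψ)) e) :
    ∀ d g h, Sim ψ e d g h → WinP ψ d := by
  induction hw with
  | mk e m' hm hw ih =>
    intro d g h S
    have hle := S.le
    have hld := S.ld
    have hpe := S.pe
    have hm2 := hm
    rw [sdf_append _ _ _ (by omega)] at hm2
    obtain ⟨-, m, z, hr, hlt, hp, hat, hdf, -, -⟩ := hm2
    obtain ⟨s, r⟩ := m'
    simp only at hr hat hdf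
    subst hr
    rcases Nat.lt_or_ge m 3 with h3 | h3
    · have h1 : m = 1 := by omega
      subst h1
      cases z with
      | false =>
        obtain ⟨k, χ, j1, j2, j3, j4⟩ := hdf rfl
        rw [S.e1] at j1 j4
        simp only [Option.some.injEq, Prod.mk.injEq] at j1
        obtain ⟨rfl, -⟩ := j1
        rw [S.e0] at j3
        cases j3
        cases j4
      | true =>
        obtain ⟨χ, j1, j2, j3⟩ := hat rfl
        rw [S.e1] at j1
        cases j1
        cases j3
        have S' := S.repeat_step hm
        exact ih _ S'.de _ _ _ S'
    · have hd := S.p_step h3 hm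
      refine WinP.mk d _ hd ?_
      intro n hn
      have hn2 := hn
      rw [sdf_append _ _ _ (by simp)] at hn2
      obtain ⟨-, q, w, hr, -⟩ := hn2
      obtain ⟨t, r⟩ := n
      simp only at hr
      subst hr
      have S' := S.o_step h3 hm hn
      exact ih _ S'.de _ _ _ S'

theorem sdf_root (φ : Formula) (h : ¬ φ.isAtomic) :
    SDialogueFor NRules φ [⟨.form φ, none⟩] := by
  refine ⟨⟨?_, ?_⟩, ⟨?_, ?_⟩, ?_⟩
  · intro _; simp
  · intro i h1 h2; simp at h2; omega
  · intro i h1 h2 a ha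
    simp at h1
    subst h1
    simp at ha
    subst ha
    exact absurd trivial h
  · intro m hm i hi j hj _ _
    simp at hi hj
    omega
  · simp [CommencesWith]

theorem winP_first_move (φ : Formula) (h : NValid (.neg φ)) :
    WinP (.neg φ) [⟨.form (.neg φ), none⟩, ⟨.form φ, some (0, true)⟩] := by
  obtain ⟨h0, hw⟩ := winP_of_nvalid _ h
  refine hw ⟨.form φ, some (0, true)⟩ ?_
  rw [sdf_append _ _ _ (by simp)]
  refine ⟨h0, 0, true, rfl, by simp, by simp, ?_, by simp, by simp, ?_⟩
  · intro _
    exact ⟨.neg φ, by simp, by simp [Formula.isAtomic], Attacks.neg φ⟩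
  · intro _ _ i hi
    simp at hi
    subst hi
    simp

theorem exists_defense (φ : Formula) (s : Statement) (h : Attacks s φ)
    (hn : ∀ ψ, φ ≠ .neg ψ) : ∃ t, Defends t s φ := by
  cases h with
  | conjL a b => exact ⟨_, Defends.conjL a b⟩
  | conjR a b => exact ⟨_, Defends.conjR a b⟩
  | disj a b => exact ⟨_, Defends.disjL a b⟩
  | impl a b => exact ⟨_, Defends.impl a b⟩
  | neg a => exact absurd rfl (hn a)

/-- P's move 2 must be an attack on move 1. -/
theorem second_move (φ : Formula) (m : Move) (hm : SDialogueFor NRules (.neg φ)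
    ([⟨.form (.neg φ), none⟩, ⟨.form φ, some (0, true)⟩] ++ [m])) :
    m.ref = some (1, true) ∧ Attacks m.stmt φ ∧
      ∀ a, m.stmt = .form (.atom a) → φ = .atom a := by
  rw [sdf_append _ _ _ (by simp)] at hm
  obtain ⟨-, q, w, hr, hq, hp, hat, hdf, h10, -⟩ := hm
  simp at hq hp
  have h1 : q = 1 := by omega
  subst h1
  cases w with
  | false =>
    obtain ⟨k, χ, j1, j2, j3, j4⟩ := hdf rfl
    have h0 : k = 0 := by omega
    subst h0
    simp at j3 j4
    subst j3
    generalize m.stmt = s at j4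
    cases j4
  | true =>
    obtain ⟨χ, j1, j2, j3⟩ := hat rfl
    simp at j1
    subst j1
    refine ⟨hr, j3, ?_⟩
    intro a ha
    obtain ⟨j, k1, k2, k3⟩ := h10 (by simp) a ha
    simp at k1
    have h1 : j = 1 := by omega
    subst h1
    simpa using k3

/-- If `¬φ` is N-valid, then `φ` is itself a negation `¬ψ`,
and moreover `ψ` is N-valid. -/
theorem N_valid_negation (φ : Formula) (h : NValid (Formula.neg φ)) :
    ∃ ψ : Formula, φ = Formula.neg ψ ∧ NValid ψ := by
  have hw := winP_first_move φ h
  cases hw with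
  | mk _ m hm hw =>
    obtain ⟨hr, hat, hato⟩ := second_move φ m hm
    by_cases hneg : ∃ ψ, φ = .neg ψ
    · obtain ⟨ψ, rfl⟩ := hneg
      refine ⟨ψ, rfl, ?_⟩
      obtain ⟨s, r⟩ := m
      simp only at hr hat hato
      subst hr
      cases hat
      have hna : ¬ ψ.isAtomic := by
        intro ha
        cases ψ with
        | atom a => exact absurd (hato a rfl) (by simp)
        | _ => exact ha
      have hroot := sdf_root ψ hna
      refine nvalid_of_winP ψ hroot ?_
      intro n hn
      have hn2 := hn
      rw [sdf_append _ _ _ (by simp)] at hn2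
      obtain ⟨-, q, w, hr, hq, hp, hat, hdf, -, -⟩ := hn2
      obtain ⟨t, r⟩ := n
      simp only at hr hat hdf
      subst hr
      simp at hq
      subst hq
      cases w with
      | false =>
        obtain ⟨k, χ, j1, j2, j3, j4⟩ := hdf rfl
        omega
      | true =>
        obtain ⟨χ, j1, j2, j3⟩ := hat rfl
        simp at j1
        subst j1
        have he : SDialogueFor NRules (.neg (.neg ψ))
            ([⟨.form (.neg (.neg ψ)), none⟩, ⟨.form (.neg ψ), some (0, true)⟩] ++
              [⟨.form ψ, some (1, true)⟩] ++ [⟨t, some (2, true)⟩]) := by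
          rw [sdf_append _ _ _ (by simp)]
          refine ⟨hm, 2, true, rfl, by simp, by simp, ?_, by simp, by simp, ?_⟩
          · intro _
            exact ⟨ψ, by simp, hna, j3⟩
          · intro _ _ i hi
            simp at hi
            interval_cases i <;> simp
        refine winP_of_sim ψ _ (hw _ he) _ (fun j => j - 2) (fun i => i + 2) ?_
        constructor
        · exact he
        · exact hn
        · simp
        · simp
        · simp
        · simp
        · simp
        · simp
        · simp
        · intro j h2 hj
          simp at hj
          interval_cases j <;> simp
        · intro j h3 hj hp
          simp at hj
          interval_cases j
          exact ⟨2, true, by simp, by omega, by omega, by simp⟩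
        · intro i hi
          simp at hi
          simp
          omega
        · intro i h2 hi
          simp at hi
          omega
    · exfalso
      obtain ⟨t, ht⟩ := exists_defense φ m.stmt hat (fun ψ hψ => hneg ⟨ψ, hψ⟩)
      have he : SDialogueFor NRules (.neg φ)
          ([⟨.form (.neg φ), none⟩, ⟨.form φ, some (0, true)⟩] ++ [m] ++
            [⟨t, some (2, false)⟩]) := by
        rw [sdf_append _ _ _ (by simp)]
        refine ⟨hm, 2, false, rfl, by simp, by simp, by simp, ?_, by simp, by simp⟩
        intro _
        exact ⟨1, φ, by simpa using hr, by omega, by simp, by simpa using ht⟩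
      refine not_winP_of_defensible _ _ (hw _ he) (by simp) (by simp)
        ⟨2, 1, φ, t, by simp, by simp, by simpa using hr, by omega, by simp, by simpa using ht⟩
end

section
/- The law of excluded middle p ∨ ¬p, for an atom p, is N-valid. -/
/-- The unique play of the strategy. -/
def emMove (p : ℕ) : ℕ → Move
  | 0 => ⟨.form (.disj (.atom p) (.neg (.atom p))), none⟩
  | 1 => ⟨.question, some (0, true)⟩
  | 2 => ⟨.form (.neg (.atom p)), some (1, false)⟩
  | 3 => ⟨.form (.atom p), some (2, true)⟩
  | _ => ⟨.form (.atom p), some (1, false)⟩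

/-- The five nodes of the strategy. -/
def emTree (p : ℕ) : Set (List Move) :=
  {d | d = [emMove p 0] ∨ d = [emMove p 0, emMove p 1] ∨
    d = [emMove p 0, emMove p 1, emMove p 2] ∨
    d = [emMove p 0, emMove p 1, emMove p 2, emMove p 3] ∨
    d = [emMove p 0, emMove p 1, emMove p 2, emMove p 3, emMove p 4]}

/-- The full play is an N-dialogue. -/
theorem emFull (p : ℕ) : SDialogueFor NRules (.disj (.atom p) (.neg (.atom p)))
    [emMove p 0, emMove p 1, emMove p 2, emMove p 3, emMove p 4] := by
  refine ⟨⟨fun _ => ⟨rfl, _, rfl⟩, ?_⟩, ⟨?_, ?_⟩, by simp, rfl⟩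
  · intro i h0 hi
    simp only [List.length_cons, List.length_nil] at hi
    interval_cases i
    · exact ⟨0, true, rfl, by simp, by simp,
        fun _ => ⟨_, rfl, by simp [Formula.isAtomic], .disj _ _⟩, by simp⟩
    · exact ⟨1, false, rfl, by simp, by simp, by simp,
        fun _ => ⟨0, _, rfl, by simp, rfl, .disjR _ _⟩⟩
    · exact ⟨2, true, rfl, by simp, by simp,
        fun _ => ⟨_, rfl, by simp [Formula.isAtomic], .neg _⟩, by simp⟩
    · exact ⟨1, false, rfl, by simp, by simp, by simp,
        fun _ => ⟨0, _, rfl, by simp, rfl, .disjL _ _⟩⟩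
  · intro i hi h2 a ha
    simp only [List.length_cons, List.length_nil] at hi
    interval_cases i <;> simp [emMove] at h2 ha
    exact ⟨3, by simp, by simp, by simp [emMove, ha]⟩
  · intro m hm i hi j hj h1 h2
    simp only [List.length_cons, List.length_nil] at hi hj
    interval_cases i <;> interval_cases j <;> simp [emMove] at h1 h2 ⊢ <;> omega

/-- A nonempty prefix of an N-dialogue is an N-dialogue. -/
theorem emPrefix {φ : Formula} {d e : List Move} (h : SDialogueFor NRules φ (d ++ e))
    (hd : 0 < d.length) : SDialogueFor NRules φ d := by
  have key : ∀ i < d.length, (d ++ e)[i]! = d[i]! := by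
    intro i hi
    simp [List.getElem?_append_left hi]
  have hlen : d.length ≤ (d ++ e).length := by simp
  obtain ⟨⟨h1, h2⟩, ⟨h3, h4⟩, h5, h6⟩ := h
  refine ⟨⟨fun h => ?_, ?_⟩, ⟨?_, ?_⟩, hd, ?_⟩
  · rw [← key 0 h]; exact h1 (by omega)
  · intro i hi hid
    obtain ⟨m, z, hr, hm, hp, ha, hb⟩ := h2 i hi (by omega)
    rw [key i hid] at hr ha hb
    rw [key m (by omega)] at ha hb
    refine ⟨m, z, hr, hm, hp, ha, fun hz => ?_⟩
    obtain ⟨k, ψ, hk, hkm, hs, hdf⟩ := hb hz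
    rw [key k (by omega)] at hs
    exact ⟨k, ψ, hk, hkm, hs, hdf⟩
  · intro i hi hp a ha
    rw [← key i hi] at ha
    obtain ⟨j, hj, hjp, hjs⟩ := h3 i (by omega) hp a ha
    rw [key j (by omega)] at hjs
    exact ⟨j, hj, hjp, hjs⟩
  · intro m hm i hi j hj hri hrj
    rw [← key i hi] at hri
    rw [← key j hj] at hrj
    exact h4 m hm i (by omega) j (by omega) hri hrj
  · rw [← key 0 hd]; exact h6

theorem emTree_iff (p : ℕ) (d : List Move) : d ∈ emTree p ↔
    0 < d.length ∧ d <+: [emMove p 0, emMove p 1, emMove p 2, emMove p 3, emMove p 4] := by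
  rcases d with _ | ⟨a, _ | ⟨b, _ | ⟨c, _ | ⟨e, _ | ⟨f, _ | ⟨g, l⟩⟩⟩⟩⟩⟩ <;>
    simp [emTree]

/-- After one move, O can only ask. -/
theorem emStep1 (p : ℕ) (m : Move) (h : SDialogueFor NRules (.disj (.atom p) (.neg (.atom p)))
    [emMove p 0, m]) : m = emMove p 1 := by
  obtain ⟨⟨-, h2⟩, -, -⟩ := h
  obtain ⟨k, z, hr, hk, hp, ha, hb⟩ := h2 1 (by simp) (by simp)
  obtain ⟨s, r⟩ := m
  interval_cases k
  cases z
  · obtain ⟨k, ψ, hk, hkm, -⟩ := hb rfl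
    omega
  · obtain ⟨ψ, hψ, -, hA⟩ := ha rfl
    simp [emMove] at hr hψ hA
    subst hψ
    cases hA
    simp [emMove, hr]

/-- After three moves, O can only attack the negation. -/
theorem emStep3 (p : ℕ) (m : Move) (h : SDialogueFor NRules (.disj (.atom p) (.neg (.atom p)))
    [emMove p 0, emMove p 1, emMove p 2, m]) : m = emMove p 3 := by
  obtain ⟨⟨-, h2⟩, ⟨-, h4⟩, -⟩ := h
  obtain ⟨k, z, hr, hk, hp, ha, hb⟩ := h2 3 (by simp) (by simp)
  obtain ⟨s, r⟩ := m
  have hk' : k = 0 ∨ k = 2 := by omega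
  rcases hk' with rfl | rfl <;> cases z
  · obtain ⟨k, ψ, hk, hkm, -⟩ := hb rfl
    omega
  · have := h4 0 (by simp) 1 (by simp) 3 (by simp) rfl hr
    omega
  · obtain ⟨k, ψ, hk, hkm, -⟩ := hb rfl
    simp [emMove] at hk
  · obtain ⟨ψ, hψ, -, hA⟩ := ha rfl
    simp [emMove] at hr hψ hA
    subst hψ
    cases hA
    simp [emMove, hr]

/-- After five moves, O has no legal move. -/
theorem emStep5 (p : ℕ) (m : Move) (h : SDialogueFor NRules (.disj (.atom p) (.neg (.atom p)))
    [emMove p 0, emMove p 1, emMove p 2, emMove p 3, emMove p 4, m]) : False := by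
  obtain ⟨⟨-, h2⟩, ⟨-, h4⟩, -⟩ := h
  obtain ⟨k, z, hr, hk, hp, ha, hb⟩ := h2 5 (by simp) (by simp)
  have hk' : k = 0 ∨ k = 2 ∨ k = 4 := by omega
  rcases hk' with rfl | rfl | rfl <;> cases z
  · obtain ⟨k, ψ, hk, hkm, -⟩ := hb rfl
    omega
  · have := h4 0 (by simp) 1 (by simp) 5 (by simp) rfl hr
    omega
  · obtain ⟨k, ψ, hk, hkm, -⟩ := hb rfl
    simp [emMove] at hk
  · have := h4 2 (by simp) 3 (by simp) 5 (by simp) rfl hr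
    omega
  · obtain ⟨k, ψ, hk, hkm, -⟩ := hb rfl
    simp [emMove] at hk
  · obtain ⟨ψ, hψ, hna, hA⟩ := ha rfl
    simp [emMove] at hψ
    subst hψ
    simp [Formula.isAtomic] at hna

/-- The law of excluded middle `p ∨ ¬p`, for an atom `p`, is
N-valid. -/
theorem excluded_middle_N_valid (p : ℕ) :
    NValid (Formula.disj (Formula.atom p) (Formula.neg (Formula.atom p))) := by
  refine ⟨emTree p, ⟨_, Or.inl rfl⟩, ?_, ?_, ?_, ?_, ?_, ?_⟩
  · intro d hd
    obtain ⟨h0, e, he⟩ := (emTree_iff p d).1 hd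
    exact emPrefix (he ▸ emFull p) h0
  · intro d hd e he h0
    exact (emTree_iff p e).2 ⟨h0, he.trans ((emTree_iff p d).1 hd).2⟩
  · intro d hd hleaf
    rcases hd with rfl | rfl | rfl | rfl | rfl
    · exact absurd (by simp [emTree]) (hleaf (emMove p 1))
    · exact absurd (by simp [emTree]) (hleaf (emMove p 2))
    · exact absurd (by simp [emTree]) (hleaf (emMove p 3))
    · exact absurd (by simp [emTree]) (hleaf (emMove p 4))
    · exact ⟨emFull p, by simp, fun m hm => emStep5 p m hm⟩
  · intro f
    refine ⟨6, by simp, fun h => ?_⟩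
    have := ((emTree_iff p _).1 h).2.length_le
    simp at this
  · intro d hd _ hp
    rcases hd with rfl | rfl | rfl | rfl | rfl <;> simp at hp
    · exact ⟨emMove p 2, by simp [emTree], fun m hm => by simpa [emTree] using hm⟩
    · exact ⟨emMove p 4, by simp [emTree], fun m hm => by simpa [emTree] using hm⟩
  · intro d hd hp m hm
    rcases hd with rfl | rfl | rfl | rfl | rfl <;> simp at hp
    · rw [emStep1 p m hm]; simp [emTree]
    · rw [emStep3 p m hm]; simp [emTree]
    · exact (emStep5 p m hm).elim
end
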